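/- arXiv:2108.06888 — 8 statements merged into one kernel-verified Lean document; each statement's English description precedes it below -/
import Mathlib

section
/- Let P₁,…,Pₙ be n matrices in ℝ^{r₁×r₂}, each with orthonormal columns, and let a be a constant with 0 ≤ a ≤ 1/2 such that aff_∞(P_i,P_j) ≤ a for all 1 ≤ i ≠ j ≤ n. Then every vector g with unit ℓ₂-norm lying in the subspace span(P₁) + … + span(Pₙ) satisfies 1 − (n−1)a ≤ Σ_{i=1}^n ‖P_iᵀ g‖₂² ≤ 1 + (n−1)a. -/
open scoped RealInnerProductSpace

/-!
Finitely many isometries `P i : E i → F` assemble into one operator `T x = ∑ i, P i (x i)` on the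
Hilbert sum of the `E i`. Its range is the span of their ranges, and `‖T† g‖² = ∑ i, ‖(P i)† g‖²`.
Expanding `‖T x‖²`, the diagonal terms give `‖x‖²`, while small affinity and Cauchy–Schwarz bound
the off-diagonal ones by `(n - 1) a ‖x‖²`. Two-sided bounds on `‖T x‖²` relative to `‖x‖²` pass to
`T†`: from above because `‖T†‖ = ‖T‖`, from below on the range of `T`, by pairing `T x` with itself.
-/

section OffDiagonal

variable {ι : Type*}

theorem sum_sum_eq_sum_diag_add_sum_offDiag {M : Type*} [AddCommMonoid M] (s : Finset ι)
    (f : ι → ι → M) :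
    ∑ i ∈ s, ∑ j ∈ s, f i j = ∑ i ∈ s, f i i + ∑ p ∈ s.offDiag, f p.1 p.2 := by
  classical
  rw [← Finset.sum_product', ← Finset.diag_union_offDiag,
    Finset.sum_union (Finset.disjoint_diag_offDiag s), Finset.sum_diag]

theorem sum_offDiag_mul_le (s : Finset ι) (r : ι → ℝ) :
    ∑ p ∈ s.offDiag, r p.1 * r p.2 ≤ ((s.card : ℝ) - 1) * ∑ i ∈ s, r i ^ 2 := by
  have expand : (∑ i ∈ s, r i) ^ 2 = ∑ i ∈ s, r i ^ 2 + ∑ p ∈ s.offDiag, r p.1 * r p.2 := by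
    simp only [sq, Finset.sum_mul_sum, sum_sum_eq_sum_diag_add_sum_offDiag]
  linarith [sq_sum_le_card_mul_sum_sq (s := s) (f := r)]

variable {𝕜 F : Type*} [RCLike 𝕜] [SeminormedAddCommGroup F] [InnerProductSpace 𝕜 F]

variable (𝕜) in
theorem norm_sum_sq_eq_sum_norm_sq_add (s : Finset ι) (v : ι → F) :
    ‖∑ i ∈ s, v i‖ ^ 2 =
      ∑ i ∈ s, ‖v i‖ ^ 2 + ∑ p ∈ s.offDiag, RCLike.re (inner 𝕜 (v p.1) (v p.2)) := by
  simp only [@norm_sq_eq_re_inner 𝕜, sum_inner, inner_sum s, ← map_sum, ← map_add,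
    ← sum_sum_eq_sum_diag_add_sum_offDiag s fun i j => inner 𝕜 (v i) (v j)]
  rw [Finset.sum_comm]

theorem abs_norm_sum_sq_sub_sum_norm_sq_le {s : Finset ι} {v : ι → F} {a : ℝ} (ha : 0 ≤ a)
    (hv : (s : Set ι).Pairwise fun i j => ‖inner 𝕜 (v i) (v j)‖ ≤ a * ‖v i‖ * ‖v j‖) :
    |‖∑ i ∈ s, v i‖ ^ 2 - ∑ i ∈ s, ‖v i‖ ^ 2| ≤
      ((s.card : ℝ) - 1) * a * ∑ i ∈ s, ‖v i‖ ^ 2 := by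
  rw [norm_sum_sq_eq_sum_norm_sq_add 𝕜, add_sub_cancel_left]
  calc |∑ p ∈ s.offDiag, RCLike.re (inner 𝕜 (v p.1) (v p.2))|
      ≤ ∑ p ∈ s.offDiag, |RCLike.re (inner 𝕜 (v p.1) (v p.2))| := Finset.abs_sum_le_sum_abs _ _
    _ ≤ ∑ p ∈ s.offDiag, a * (‖v p.1‖ * ‖v p.2‖) := by
        refine Finset.sum_le_sum fun p hp => ?_
        obtain ⟨hi, hj, hij⟩ := Finset.mem_offDiag.mp hp
        exact (RCLike.abs_re_le_norm _).trans ((hv hi hj hij).trans_eq (mul_assoc _ _ _))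
    _ ≤ a * (((s.card : ℝ) - 1) * ∑ i ∈ s, ‖v i‖ ^ 2) := by
        rw [← Finset.mul_sum]
        gcongr
        exact sum_offDiag_mul_le s fun i => ‖v i‖
    _ = ((s.card : ℝ) - 1) * a * ∑ i ∈ s, ‖v i‖ ^ 2 := by ring

end OffDiagonal

section AdjointBounds

open ContinuousLinearMap (adjoint)

variable {𝕜 E F : Type*} [RCLike 𝕜]
  [NormedAddCommGroup E] [InnerProductSpace 𝕜 E] [CompleteSpace E]
  [NormedAddCommGroup F] [InnerProductSpace 𝕜 F] [CompleteSpace F]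
  {T : E →L[𝕜] F} {c : ℝ}

theorem norm_adjoint_apply_sq_le (hc : 0 ≤ c) (hT : ∀ x, ‖T x‖ ^ 2 ≤ c * ‖x‖ ^ 2) (g : F) :
    ‖adjoint T g‖ ^ 2 ≤ c * ‖g‖ ^ 2 := by
  have norm_le : ‖adjoint T‖ ≤ √c := by
    rw [LinearIsometryEquiv.norm_map]
    refine T.opNorm_le_bound (Real.sqrt_nonneg c) fun x => ?_
    refine le_of_sq_le_sq ?_ (by positivity)
    simpa only [mul_pow, Real.sq_sqrt hc] using hT x
  calc ‖adjoint T g‖ ^ 2 ≤ (√c * ‖g‖) ^ 2 := by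
        gcongr
        exact (adjoint T).le_of_opNorm_le norm_le g
    _ = c * ‖g‖ ^ 2 := by rw [mul_pow, Real.sq_sqrt hc]

theorem norm_apply_sq_le_norm_mul_norm_adjoint_apply (T : E →L[𝕜] F) (x : E) :
    ‖T x‖ ^ 2 ≤ ‖x‖ * ‖adjoint T (T x)‖ := by
  rw [T.apply_norm_sq_eq_inner_adjoint_right]
  exact re_inner_le_norm _ _

theorem le_norm_adjoint_apply_sq_of_mem_range (hT : ∀ x, c * ‖x‖ ^ 2 ≤ ‖T x‖ ^ 2) {g : F}
    (hg : g ∈ T.range) : c * ‖g‖ ^ 2 ≤ ‖adjoint T g‖ ^ 2 := by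
  obtain ⟨x, rfl⟩ := hg
  rcases eq_or_ne x 0 with rfl | hx
  · simp
  refine le_of_mul_le_mul_left ?_ (pow_pos (norm_pos_iff.mpr hx) 2)
  calc ‖x‖ ^ 2 * (c * ‖T x‖ ^ 2) = c * ‖x‖ ^ 2 * ‖T x‖ ^ 2 := by ring
    _ ≤ ‖T x‖ ^ 2 * ‖T x‖ ^ 2 := by gcongr; exact hT x
    _ ≤ (‖x‖ * ‖adjoint T (T x)‖) * (‖x‖ * ‖adjoint T (T x)‖) := by
        gcongr <;> exact norm_apply_sq_le_norm_mul_norm_adjoint_apply T x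
    _ = ‖x‖ ^ 2 * ‖adjoint T (T x)‖ ^ 2 := by ring

end AdjointBounds

section Synthesis

open ContinuousLinearMap (adjoint)

variable {𝕜 ι F : Type*} [RCLike 𝕜] [Fintype ι] {E : ι → Type*}
  [∀ i, NormedAddCommGroup (E i)] [∀ i, InnerProductSpace 𝕜 (E i)]
  [NormedAddCommGroup F] [InnerProductSpace 𝕜 F]

/-- The synthesis operator `x ↦ ∑ i, P i (x i)` of a finite family of operators, on the Hilbert sum
of their domains. In matrix terms it is the block row `[P₁ ⋯ Pₙ]`. -/
noncomputable def synthesis (P : ∀ i, E i →L[𝕜] F) : PiLp 2 E →L[𝕜] F :=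
  ∑ i, P i ∘L PiLp.proj 2 E i

theorem synthesis_apply (P : ∀ i, E i →L[𝕜] F) (x : PiLp 2 E) :
    synthesis P x = ∑ i, P i (x i) := by
  simp [synthesis]

theorem iSup_range_le_range_synthesis (P : ∀ i, E i →L[𝕜] F) :
    ⨆ i, (P i).range ≤ (synthesis P).range := by
  classical
  refine iSup_le fun i => ?_
  rintro _ ⟨y, rfl⟩
  refine ⟨PiLp.single 2 i y, ?_⟩
  change synthesis P (PiLp.single 2 i y) = P i y
  rw [synthesis_apply, Finset.sum_eq_single_of_mem i (Finset.mem_univ i), PiLp.single_eq_same]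
  intro j _ hj
  rw [PiLp.single_eq_of_ne 2 hj, map_zero]

theorem abs_norm_synthesis_sq_sub_norm_sq_le {P : ∀ i, E i →ₗᵢ[𝕜] F} {a : ℝ} (ha : 0 ≤ a)
    (hP : Pairwise fun i j => ∀ x y, ‖inner 𝕜 (P i x) (P j y)‖ ≤ a * ‖x‖ * ‖y‖) (x : PiLp 2 E) :
    |‖synthesis (fun i => (P i).toContinuousLinearMap) x‖ ^ 2 - ‖x‖ ^ 2| ≤
      ((Fintype.card ι : ℝ) - 1) * a * ‖x‖ ^ 2 := by
  have pairwise_le : ((Finset.univ : Finset ι) : Set ι).Pairwise fun i j =>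
      ‖inner 𝕜 (P i (x i)) (P j (x j))‖ ≤ a * ‖P i (x i)‖ * ‖P j (x j)‖ := by
    intro i _ j _ hij
    simpa only [LinearIsometry.norm_map] using hP hij (x i) (x j)
  simpa only [synthesis_apply, LinearIsometry.coe_toContinuousLinearMap, LinearIsometry.norm_map,
    PiLp.norm_sq_eq_of_L2, Finset.card_univ] using abs_norm_sum_sq_sub_sum_norm_sq_le ha pairwise_le

variable [∀ i, CompleteSpace (E i)] [CompleteSpace F]

theorem adjoint_synthesis_apply (P : ∀ i, E i →L[𝕜] F) (g : F) :
    adjoint (synthesis P) g = WithLp.toLp 2 fun i => adjoint (P i) g := by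
  refine ext_inner_left 𝕜 fun x => ?_
  simp only [ContinuousLinearMap.adjoint_inner_right, synthesis_apply, sum_inner, PiLp.inner_apply]

theorem norm_adjoint_synthesis_apply_sq (P : ∀ i, E i →L[𝕜] F) (g : F) :
    ‖adjoint (synthesis P) g‖ ^ 2 = ∑ i, ‖adjoint (P i) g‖ ^ 2 := by
  rw [adjoint_synthesis_apply, PiLp.norm_sq_eq_of_L2]

variable {P : ∀ i, E i →ₗᵢ[𝕜] F} {a : ℝ}

theorem le_sum_norm_adjoint_apply_sq (ha : 0 ≤ a)
    (hP : Pairwise fun i j => ∀ x y, ‖inner 𝕜 (P i x) (P j y)‖ ≤ a * ‖x‖ * ‖y‖)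
    {g : F} (hg : g ∈ ⨆ i, (P i).toLinearMap.range) :
    (1 - ((Fintype.card ι : ℝ) - 1) * a) * ‖g‖ ^ 2 ≤
      ∑ i, ‖adjoint (P i).toContinuousLinearMap g‖ ^ 2 := by
  rw [← norm_adjoint_synthesis_apply_sq]
  refine le_norm_adjoint_apply_sq_of_mem_range (fun x => ?_) (iSup_range_le_range_synthesis _ hg)
  linarith [neg_le_of_abs_le (abs_norm_synthesis_sq_sub_norm_sq_le ha hP x)]

theorem sum_norm_adjoint_apply_sq_le [Nonempty ι] (ha : 0 ≤ a)
    (hP : Pairwise fun i j => ∀ x y, ‖inner 𝕜 (P i x) (P j y)‖ ≤ a * ‖x‖ * ‖y‖) (g : F) :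
    ∑ i, ‖adjoint (P i).toContinuousLinearMap g‖ ^ 2 ≤
      (1 + ((Fintype.card ι : ℝ) - 1) * a) * ‖g‖ ^ 2 := by
  rw [← norm_adjoint_synthesis_apply_sq]
  have one_le_card : (1 : ℝ) ≤ Fintype.card ι := mod_cast Fintype.card_pos
  have bound_nonneg : 0 ≤ 1 + ((Fintype.card ι : ℝ) - 1) * a :=
    add_nonneg zero_le_one (mul_nonneg (sub_nonneg.mpr one_le_card) ha)
  refine norm_adjoint_apply_sq_le bound_nonneg (fun x => ?_) g
  linarith [le_of_abs_le (abs_norm_synthesis_sq_sub_norm_sq_le ha hP x)]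

theorem stmt_0_general (P : ∀ i, E i →ₗᵢ[𝕜] F) {a : ℝ} (ha : 0 ≤ a)
    (hP : Pairwise fun i j => ∀ x y, ‖inner 𝕜 (P i x) (P j y)‖ ≤ a * ‖x‖ * ‖y‖)
    {g : F} (hg : g ∈ ⨆ i, (P i).toLinearMap.range) :
    (1 - ((Fintype.card ι : ℝ) - 1) * a) * ‖g‖ ^ 2 ≤
        ∑ i, ‖adjoint (P i).toContinuousLinearMap g‖ ^ 2 ∧
      ∑ i, ‖adjoint (P i).toContinuousLinearMap g‖ ^ 2 ≤
        (1 + ((Fintype.card ι : ℝ) - 1) * a) * ‖g‖ ^ 2 := by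
  refine ⟨le_sum_norm_adjoint_apply_sq ha hP hg, ?_⟩
  cases isEmpty_or_nonempty ι with
  | inl _ =>
    obtain rfl : g = 0 := by rwa [iSup_of_empty, Submodule.mem_bot] at hg
    simp
  | inr _ => exact sum_norm_adjoint_apply_sq_le ha hP g

end Synthesis

/-- Let `P₁,…,Pₙ` be `n` matrices in `ℝ^{r₁×r₂}` with orthonormal columns
(encoded as linear isometries `ℝ^{r₂} → ℝ^{r₁}`), and `0 ≤ a ≤ 1/2` with
`aff_∞(P_i, P_j) ≤ a` for all `i ≠ j` (the largest singular value of `P_iᵀP_j`, i.e. the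
supremum of `|⟪P_i x, P_j y⟫|` over unit vectors `x, y`).  Then every unit vector `g` in
`span(P₁) + … + span(Pₙ)` satisfies
`1 − (n−1)a ≤ ∑ i, ‖P_iᵀ g‖² ≤ 1 + (n−1)a`, where `P_iᵀ = adjoint (P_i)`. -/
theorem stmt_0 (r₁ r₂ n : ℕ)
    (P : Fin n → (EuclideanSpace ℝ (Fin r₂) →ₗ[ℝ] EuclideanSpace ℝ (Fin r₁)))
    (hP : ∀ i (x : EuclideanSpace ℝ (Fin r₂)), ‖P i x‖ = ‖x‖)
    (a : ℝ) (ha0 : 0 ≤ a) (ha : a ≤ 1 / 2)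
    (haff : ∀ i j, i ≠ j → ∀ (x y : EuclideanSpace ℝ (Fin r₂)),
      |⟪P i x, P j y⟫| ≤ a * ‖x‖ * ‖y‖)
    (g : EuclideanSpace ℝ (Fin r₁)) (hg : ‖g‖ = 1)
    (hmem : g ∈ ⨆ i, LinearMap.range (P i)) :
    1 - ((n : ℝ) - 1) * a ≤ ∑ i, ‖LinearMap.adjoint (P i) g‖ ^ 2 ∧
      ∑ i, ‖LinearMap.adjoint (P i) g‖ ^ 2 ≤ 1 + ((n : ℝ) - 1) * a := by
  have bounds := stmt_0_general (fun i => ⟨P i, hP i⟩) ha0 (fun i j => haff i j) hmem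
  -- `LinearMap.adjoint` unfolds to the adjoint of the associated continuous linear map.
  rwa [hg, Fintype.card_fin, one_pow, mul_one, mul_one] at bounds
end

section
/- Let b ∈ ℝ^m be a random vector uniformly distributed on the unit sphere S^{m−1}, and let λ₁,…,λ_m be constants with 1 ≥ λ₁ ≥ λ₂ ≥ … ≥ λ_m ≥ 0. Fix a constant g₁ ∈ (λ_m, λ₁) and set r_i = max(g₁² − λ_i², 0) and s_i = max(λ_i² − g₁², 0) for i = 1,…,m. Assume Σ_{i=1}^m r_i > Σ_{i=1}^m s_i. Then Σ_{i=1}^m λ_i² b_i² < g₁² holds with probability at least 1 − 2e^{−ε²}, where ε = (Σ_{i=1}^m (r_i − s_i)) / [ (√(Σ_{i=1}^m r_i²) + √(Σ_{i=1}^m s_i²)) + √( (√(Σ_{i=1}^m r_i²) + √(Σ_{i=1}^m s_i²))² + 2 s₁ Σ_{i=1}^m (r_i − s_i) ) ]. -/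
open MeasureTheory

/-- The rotation-invariant probability measure on the unit sphere `S^{m−1}` of `ℝ^m`,
encoded as a probability measure on `ℝ^m` concentrated on the unit sphere and invariant
under every linear isometry of `ℝ^m`. -/
def IsUniformOnSphere {m : ℕ} (ν : Measure (EuclideanSpace ℝ (Fin m))) : Prop :=
  IsProbabilityMeasure ν ∧ ν {x | ‖x‖ = 1}ᶜ = 0 ∧
    ∀ O : EuclideanSpace ℝ (Fin m) ≃ₗᵢ[ℝ] EuclideanSpace ℝ (Fin m),
      Measure.map O ν = ν

/-!
If `x` is standard Gaussian and `b` is independent of it and uniform on the sphere, then `‖x‖ • b`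
is standard Gaussian again, so the law of `b` gives a cone at most its Gaussian measure.
On the sphere `∑ λᵢ² bᵢ² < g²` means `∑ wᵢ bᵢ² < 0` with `wᵢ = λᵢ² - g²`, so it fails on a cone.
The Gaussian measure of this cone is controlled by the Laurent–Massart tail bound
`P(∑ wᵢ xᵢ² ≥ ∑ wᵢ + 2 A ε + 2 s ε²) ≤ exp (-ε²)`, valid if `√(∑ wᵢ²) ≤ A`, `wᵢ ≤ s` and `0 ≤ s`;
`ε` is chosen as the root of `2 A ε + 2 s ε² = -∑ wᵢ`, which puts the threshold at zero.
-/

open ProbabilityTheory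

section Cone

variable {E : Type*} [NormedAddCommGroup E] [InnerProductSpace ℝ E] [MeasurableSpace E]
  [BorelSpace E] {μ ν : Measure E}

lemma charFun_eq_of_norm_eq (hν : ∀ O : E ≃ₗᵢ[ℝ] E, ν.map O = ν) {s t : E} (hst : ‖s‖ = ‖t‖) :
    charFun ν s = charFun ν t := by
  let O : E ≃ₗᵢ[ℝ] E := (ℝ ∙ (s - t))ᗮ.reflection
  have hO : O s = t := Submodule.reflection_sub hst
  calc charFun ν s
      = ∫ x, Complex.exp (inner ℝ (O x) (O s) * Complex.I) ∂ν := by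
        simp_rw [charFun_apply, LinearIsometryEquiv.inner_map_map]
    _ = charFun (ν.map O) t := by
        rw [hO, charFun_apply, integral_map (by fun_prop)
          (Measurable.aestronglyMeasurable (by fun_prop))]
    _ = charFun ν t := by rw [hν O]

variable [SecondCountableTopology E]

lemma integrable_exp_inner_mul_I {α : Type*} [MeasurableSpace α] {ρ : Measure α}
    [IsFiniteMeasure ρ] {f g : α → E} (hf : Measurable f) (hg : Measurable g) :
    Integrable (fun p ↦ Complex.exp (inner ℝ (f p) (g p) * Complex.I)) ρ :=
  .of_bound (Measurable.aestronglyMeasurable (by fun_prop)) 1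
    (.of_forall fun _ ↦ (Complex.norm_exp_ofReal_mul_I _).le)

lemma integral_charFun_smul_comm [IsFiniteMeasure μ] [IsFiniteMeasure ν] (c : ℝ) :
    ∫ x, charFun ν (c • x) ∂μ = ∫ y, charFun μ (c • y) ∂ν := by
  simp_rw [charFun_apply]
  rw [integral_integral_swap
    (integrable_exp_inner_mul_I measurable_snd (measurable_fst.const_smul c))]
  simp_rw [real_inner_smul_right, real_inner_comm]

lemma charFun_map_norm_smul [IsFiniteMeasure μ] [IsFiniteMeasure ν] (t : E) :
    charFun ((μ.prod ν).map fun p ↦ ‖p.1‖ • p.2) t = ∫ x, charFun ν (‖x‖ • t) ∂μ := by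
  rw [charFun_apply, integral_map (by fun_prop) (Measurable.aestronglyMeasurable (by fun_prop)),
    integral_prod _ (integrable_exp_inner_mul_I (by fun_prop) measurable_const)]
  simp_rw [charFun_apply, real_inner_smul_left, real_inner_smul_right]

variable [CompleteSpace E]

lemma map_norm_smul_prod_eq [IsFiniteMeasure μ] [IsProbabilityMeasure ν]
    (hμ : ∀ O : E ≃ₗᵢ[ℝ] E, μ.map O = μ) (hν : ∀ O : E ≃ₗᵢ[ℝ] E, ν.map O = ν)
    (hsphere : ∀ᵐ b ∂ν, ‖b‖ = 1) :
    (μ.prod ν).map (fun p ↦ ‖p.1‖ • p.2) = μ := by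
  refine Measure.ext_of_charFun (funext fun t ↦ ?_)
  calc charFun ((μ.prod ν).map fun p ↦ ‖p.1‖ • p.2) t
      = ∫ x, charFun ν (‖x‖ • t) ∂μ := charFun_map_norm_smul t
    _ = ∫ x, charFun ν (‖t‖ • x) ∂μ := by
        congr with x
        exact charFun_eq_of_norm_eq hν (by simp [norm_smul, mul_comm])
    _ = ∫ b, charFun μ (‖t‖ • b) ∂ν := integral_charFun_smul_comm _
    _ = ∫ _, charFun μ t ∂ν := by
        refine integral_congr_ae (hsphere.mono fun b hb ↦ ?_)
        exact charFun_eq_of_norm_eq hμ (by simp [norm_smul, hb])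
    _ = charFun μ t := by simp

lemma measure_cone_le_of_isometryInvariant [IsProbabilityMeasure μ] [IsProbabilityMeasure ν]
    (hμ : ∀ O : E ≃ₗᵢ[ℝ] E, μ.map O = μ) (hν : ∀ O : E ≃ₗᵢ[ℝ] E, ν.map O = ν)
    (hsphere : ∀ᵐ b ∂ν, ‖b‖ = 1) {C : Set E} (hC : MeasurableSet C)
    (hcone : ∀ r : ℝ, 0 ≤ r → ∀ x ∈ C, r • x ∈ C) : ν C ≤ μ C :=
  calc ν C = (μ.prod ν) (Set.univ ×ˢ C) := by simp
    _ ≤ (μ.prod ν) ((fun p ↦ ‖p.1‖ • p.2) ⁻¹' C) :=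
        measure_mono fun p hp ↦ hcone ‖p.1‖ (norm_nonneg _) p.2 hp.2
    _ = μ C := by
        rw [← Measure.map_apply (by fun_prop) hC, map_norm_smul_prod_eq hμ hν hsphere]

end Cone

section GaussianQuadraticForm

-- If `1 ≤ 2 * c * v`, both sides are `0` by the conventions for non-integrable functions and `√`.
lemma integral_exp_mul_sq_gaussianReal (c : ℝ) (v : NNReal) :
    ∫ x, Real.exp (c * x ^ 2) ∂(gaussianReal 0 v) = (√(1 - 2 * c * v))⁻¹ := by
  rcases eq_or_ne v 0 with rfl | hv
  · simp
  have hv' : (v : ℝ) ≠ 0 := by exact_mod_cast hv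
  calc ∫ x, Real.exp (c * x ^ 2) ∂(gaussianReal 0 v)
      = ∫ x, (√(2 * Real.pi * v))⁻¹ * Real.exp (-((1 - 2 * c * v) / (2 * v)) * x ^ 2) := by
        rw [integral_gaussianReal_eq_integral_smul hv]
        congr with x
        rw [gaussianPDFReal, smul_eq_mul, mul_assoc, ← Real.exp_add]
        congr 2
        field_simp
        ring
    _ = √((2 * Real.pi * v)⁻¹ * (Real.pi / ((1 - 2 * c * v) / (2 * v)))) := by
        rw [integral_const_mul, integral_gaussian, ← Real.sqrt_inv, ← Real.sqrt_mul (by positivity)]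
    _ = (√(1 - 2 * c * v))⁻¹ := by
        rw [← Real.sqrt_inv]
        congr 1
        have := Real.pi_ne_zero
        field_simp

variable {ι : Type*} [Fintype ι]

lemma mgf_sum_mul_sq_stdGaussian (w : ι → ℝ) (θ : ℝ) :
    mgf (fun x : EuclideanSpace ℝ ι ↦ ∑ i, w i * x i ^ 2) (stdGaussian (EuclideanSpace ℝ ι)) θ =
      ∏ i, (√(1 - 2 * (θ * w i)))⁻¹ := by
  have exp_eq_prod (x : ι → ℝ) :
      Real.exp (θ * ∑ i, w i * x i ^ 2) = ∏ i, Real.exp (θ * w i * x i ^ 2) := by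
    simp_rw [← Real.exp_sum, Finset.mul_sum, mul_assoc]
  rw [mgf, ← map_pi_eq_stdGaussian, integral_map (by fun_prop)
    (Measurable.aestronglyMeasurable (by fun_prop))]
  simp_rw [exp_eq_prod]
  rw [integral_fintype_prod_eq_prod (f := fun i x ↦ Real.exp (θ * w i * x ^ 2))]
  simp [integral_exp_mul_sq_gaussianReal]

lemma neg_log_one_sub_le_of_nonpos {u : ℝ} (hu : u ≤ 0) : -Real.log (1 - u) ≤ u + u ^ 2 / 2 :=
  calc -Real.log (1 - u) ≤ -(2 * -u / (-u + 2)) := by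
        simpa [sub_eq_add_neg] using Real.le_log_one_add_of_nonneg (neg_nonneg.2 hu)
    _ = u + u ^ 2 / (2 - u) := by
        have : 2 - u ≠ 0 := by linarith
        rw [neg_add_eq_sub]
        field_simp
        ring
    _ ≤ u + u ^ 2 / 2 := by gcongr; linarith

-- The bound is `log y ≤ sinh (log y) = (y - y⁻¹) / 2` at `y = (1 - u)⁻¹`.
lemma neg_log_one_sub_le_of_nonneg {u : ℝ} (hu : 0 ≤ u) (hu1 : u < 1) :
    -Real.log (1 - u) ≤ u + u ^ 2 / 2 / (1 - u) := by
  have hpos : 0 < 1 - u := sub_pos.2 hu1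
  calc -Real.log (1 - u) = Real.log (1 - u)⁻¹ := (Real.log_inv _).symm
    _ ≤ Real.sinh (Real.log (1 - u)⁻¹) :=
        Real.self_le_sinh_iff.2 (Real.log_nonneg ((one_le_inv₀ hpos).2 (by linarith)))
    _ = u + u ^ 2 / 2 / (1 - u) := by
        rw [Real.sinh_log (inv_pos.2 hpos)]
        field_simp
        ring

lemma inv_sqrt_one_sub_le_exp {u v : ℝ} (huv : u ≤ v) (hv : 0 ≤ v) (hv1 : v < 1) :
    (√(1 - u))⁻¹ ≤ Real.exp (u / 2 + u ^ 2 / 4 / (1 - v)) := by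
  have hpos : 0 < 1 - u := by linarith
  have log_bound : -Real.log (1 - u) ≤ u + u ^ 2 / 2 / (1 - v) := by
    rcases le_total u 0 with hu | hu
    · exact (neg_log_one_sub_le_of_nonpos hu).trans
        (add_le_add le_rfl (le_div_self (by positivity) (by linarith) (by linarith)))
    · refine (neg_log_one_sub_le_of_nonneg hu (by linarith)).trans ?_
      gcongr
  rw [← Real.log_le_iff_le_exp (by positivity), Real.log_inv, Real.log_sqrt hpos.le]
  calc -(Real.log (1 - u) / 2) = -Real.log (1 - u) / 2 := by ring
    _ ≤ (u + u ^ 2 / 2 / (1 - v)) / 2 := by gcongr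
    _ = u / 2 + u ^ 2 / 4 / (1 - v) := by ring

variable {w : ι → ℝ} {s : ℝ}

lemma mgf_sum_mul_sq_stdGaussian_le {θ : ℝ} (hw : ∀ i, w i ≤ s) (hs : 0 ≤ s) (hθ : 0 ≤ θ)
    (hθs : 2 * (θ * s) < 1) :
    mgf (fun x : EuclideanSpace ℝ ι ↦ ∑ i, w i * x i ^ 2) (stdGaussian (EuclideanSpace ℝ ι)) θ ≤
      Real.exp (θ * ∑ i, w i + θ ^ 2 * (∑ i, w i ^ 2) / (1 - 2 * (θ * s))) := by
  rw [mgf_sum_mul_sq_stdGaussian]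
  calc ∏ i, (√(1 - 2 * (θ * w i)))⁻¹
      ≤ ∏ i, Real.exp (2 * (θ * w i) / 2 + (2 * (θ * w i)) ^ 2 / 4 / (1 - 2 * (θ * s))) := by
        gcongr with i
        exact inv_sqrt_one_sub_le_exp (by gcongr; exact hw i) (by positivity) hθs
    _ = Real.exp (θ * ∑ i, w i + θ ^ 2 * (∑ i, w i ^ 2) / (1 - 2 * (θ * s))) := by
        rw [← Real.exp_sum, Finset.mul_sum, Finset.mul_sum, Finset.sum_div,
          ← Finset.sum_add_distrib]
        congr! 2 with i
        ring

lemma stdGaussian_real_le_exp_of_le_sum_mul_sq {θ : ℝ} (hw : ∀ i, w i ≤ s) (hs : 0 ≤ s)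
    (hθ : 0 ≤ θ) (hθs : 2 * (θ * s) < 1) (t : ℝ) :
    (stdGaussian (EuclideanSpace ℝ ι)).real {x | t ≤ ∑ i, w i * x i ^ 2} ≤
      Real.exp (-θ * t + (θ * ∑ i, w i + θ ^ 2 * (∑ i, w i ^ 2) / (1 - 2 * (θ * s)))) := by
  have mgf_ne_zero : mgf (fun x : EuclideanSpace ℝ ι ↦ ∑ i, w i * x i ^ 2)
      (stdGaussian (EuclideanSpace ℝ ι)) θ ≠ 0 := by
    rw [mgf_sum_mul_sq_stdGaussian]
    refine Finset.prod_ne_zero_iff.2 fun i _ ↦ inv_ne_zero (Real.sqrt_ne_zero'.2 ?_)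
    linarith [mul_le_mul_of_nonneg_left (hw i) hθ]
  refine (measure_ge_le_exp_mul_mgf t hθ (.of_integral_ne_zero mgf_ne_zero)).trans ?_
  rw [Real.exp_add]
  gcongr
  exact mgf_sum_mul_sq_stdGaussian_le hw hs hθ hθs

lemma stdGaussian_real_laurent_massart {A ε : ℝ} (hw : ∀ i, w i ≤ s) (hs : 0 ≤ s) (hA : 0 < A)
    (hwA : ∑ i, w i ^ 2 ≤ A ^ 2) (hε : 0 ≤ ε) :
    (stdGaussian (EuclideanSpace ℝ ι)).real
        {x | ∑ i, w i + 2 * A * ε + 2 * s * ε ^ 2 ≤ ∑ i, w i * x i ^ 2} ≤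
      Real.exp (-ε ^ 2) := by
  set θ := ε / (A + 2 * s * ε) with hθ
  have one_sub_eq : 1 - 2 * (θ * s) = A / (A + 2 * s * ε) := by rw [hθ]; field_simp; ring
  have one_sub_pos : 0 < 1 - 2 * (θ * s) := one_sub_eq ▸ by positivity
  refine (stdGaussian_real_le_exp_of_le_sum_mul_sq (θ := θ) hw hs (by positivity) (by linarith)
    _).trans (Real.exp_le_exp.2 ?_)
  calc -θ * (∑ i, w i + 2 * A * ε + 2 * s * ε ^ 2)
        + (θ * ∑ i, w i + θ ^ 2 * (∑ i, w i ^ 2) / (1 - 2 * (θ * s)))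
      ≤ -θ * (∑ i, w i + 2 * A * ε + 2 * s * ε ^ 2)
        + (θ * ∑ i, w i + θ ^ 2 * A ^ 2 / (1 - 2 * (θ * s))) := by gcongr
    _ = -ε ^ 2 := by rw [one_sub_eq, hθ]; field_simp; ring

end GaussianQuadraticForm

section Sphere

variable {ι : Type*} [Fintype ι] {ν : Measure (EuclideanSpace ℝ ι)} [IsProbabilityMeasure ν]

lemma sphere_real_nonneg_sum_mul_sq_le_stdGaussian (hsphere : ∀ᵐ b ∂ν, ‖b‖ = 1)
    (hν : ∀ O : EuclideanSpace ℝ ι ≃ₗᵢ[ℝ] EuclideanSpace ℝ ι, ν.map O = ν) (w : ι → ℝ) :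
    ν.real {b | 0 ≤ ∑ i, w i * b i ^ 2} ≤
      (stdGaussian (EuclideanSpace ℝ ι)).real {x | 0 ≤ ∑ i, w i * x i ^ 2} := by
  have hmeas : MeasurableSet {x : EuclideanSpace ℝ ι | 0 ≤ ∑ i, w i * x i ^ 2} :=
    measurableSet_le (by fun_prop) (by fun_prop)
  have smul_mem (r : ℝ) (_ : 0 ≤ r) (x : EuclideanSpace ℝ ι) (hx : 0 ≤ ∑ i, w i * x i ^ 2) :
      0 ≤ ∑ i, w i * (r • x) i ^ 2 := by
    have sum_smul : ∑ i, w i * (r • x) i ^ 2 = r ^ 2 * ∑ i, w i * x i ^ 2 := by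
      simp_rw [PiLp.smul_apply, smul_eq_mul, mul_pow, Finset.mul_sum, mul_left_comm (w _)]
    rw [sum_smul]
    positivity
  have cone_le := measure_cone_le_of_isometryInvariant (μ := stdGaussian (EuclideanSpace ℝ ι))
    (fun O ↦ stdGaussian_map O) hν hsphere hmeas smul_mem
  exact ENNReal.toReal_mono (measure_ne_top _ _) cone_le

-- `D / (A + √(A² + 2sD))` is the nonnegative root of `2sε² + 2Aε = D` with rationalised numerator,
-- so that it also makes sense for `s = 0`.
lemma two_mul_add_two_mul_sq_eq_of_eq_div {A D s ε : ℝ} (hA : 0 < A) (hD : 0 ≤ D) (hs : 0 ≤ s)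
    (hε : ε = D / (A + √(A ^ 2 + 2 * s * D))) : 2 * A * ε + 2 * s * ε ^ 2 = D := by
  set q := √(A ^ 2 + 2 * s * D)
  have q_sq : q ^ 2 = A ^ 2 + 2 * s * D := Real.sq_sqrt (by positivity)
  have hAq : A + q ≠ 0 := by positivity
  rw [hε]
  field_simp
  linear_combination -D * q_sq

lemma sum_sub_sq_le_sq_sqrt_add_sqrt (f g : ι → ℝ) :
    ∑ i, (f i - g i) ^ 2 ≤ (√(∑ i, f i ^ 2) + √(∑ i, g i ^ 2)) ^ 2 := by
  rw [← Real.sqrt_le_left (by positivity)]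
  simpa [EuclideanSpace.norm_eq] using norm_sub_le (WithLp.toLp 2 f) (WithLp.toLp 2 g)

lemma sphere_real_nonneg_sum_mul_sq_le_exp (hsphere : ∀ᵐ b ∂ν, ‖b‖ = 1)
    (hν : ∀ O : EuclideanSpace ℝ ι ≃ₗᵢ[ℝ] EuclideanSpace ℝ ι, ν.map O = ν)
    {w : ι → ℝ} {A s ε : ℝ} (hw : ∀ i, w i ≤ s) (hs : 0 ≤ s) (hA : 0 < A)
    (hwA : ∑ i, w i ^ 2 ≤ A ^ 2) (hw_sum : ∑ i, w i ≤ 0)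
    (hε : ε = (-∑ i, w i) / (A + √(A ^ 2 + 2 * s * -∑ i, w i))) :
    ν.real {b | 0 ≤ ∑ i, w i * b i ^ 2} ≤ Real.exp (-ε ^ 2) := by
  have hD : 0 ≤ -∑ i, w i := neg_nonneg.2 hw_sum
  have threshold_eq_zero : ∑ i, w i + 2 * A * ε + 2 * s * ε ^ 2 = 0 := by
    linarith [two_mul_add_two_mul_sq_eq_of_eq_div hA hD hs hε]
  have tail := stdGaussian_real_laurent_massart hw hs hA hwA (ε := ε) (hε ▸ by positivity)
  rw [threshold_eq_zero] at tail
  exact (sphere_real_nonneg_sum_mul_sq_le_stdGaussian hsphere hν w).trans tail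

lemma one_sub_sphere_real_nonneg_le_measure_sum_lt (hsphere : ∀ᵐ b ∂ν, ‖b‖ = 1) (a : ι → ℝ)
    (t : ℝ) : ENNReal.ofReal (1 - ν.real {b | 0 ≤ ∑ i, (a i - t) * b i ^ 2}) ≤
      ν {b | ∑ i, a i * b i ^ 2 < t} := by
  have hmeas : MeasurableSet {b : EuclideanSpace ℝ ι | 0 ≤ ∑ i, (a i - t) * b i ^ 2} :=
    measurableSet_le (by fun_prop) (by fun_prop)
  rw [← probReal_compl_eq_one_sub hmeas, ofReal_measureReal]
  refine measure_mono_ae (hsphere.mono fun b hb hb_compl ↦ ?_)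
  have sum_sq : ∑ i, b i ^ 2 = 1 := by rw [← EuclideanSpace.real_norm_sq_eq, hb, one_pow]
  have sum_eq : ∑ i, (a i - t) * b i ^ 2 = ∑ i, a i * b i ^ 2 - t := by
    simp_rw [sub_mul, Finset.sum_sub_distrib, ← Finset.mul_sum, sum_sq, mul_one]
  have : ¬ 0 ≤ ∑ i, (a i - t) * b i ^ 2 := hb_compl
  change ∑ i, a i * b i ^ 2 < t
  linarith

theorem stmt_4_general (hsphere : ∀ᵐ b ∂ν, ‖b‖ = 1)
    (hν : ∀ O : EuclideanSpace ℝ ι ≃ₗᵢ[ℝ] EuclideanSpace ℝ ι, ν.map O = ν)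
    {a R S : ι → ℝ} {t s ε : ℝ} (hR : ∀ i, R i = max (t - a i) 0)
    (hS : ∀ i, S i = max (a i - t) 0) (hSs : ∀ i, S i ≤ s) (hRS : ∑ i, S i < ∑ i, R i)
    (hε : ε = (∑ i, (R i - S i)) /
      ((√(∑ i, R i ^ 2) + √(∑ i, S i ^ 2)) +
        √((√(∑ i, R i ^ 2) + √(∑ i, S i ^ 2)) ^ 2 + 2 * s * ∑ i, (R i - S i)))) :
    ENNReal.ofReal (1 - Real.exp (-ε ^ 2)) ≤ ν {b | ∑ i, a i * b i ^ 2 < t} := by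
  have sub_eq (i : ι) : a i - t = S i - R i := by
    rw [hS, hR, ← neg_sub (a i) t]
    exact (posPart_sub_negPart (a i - t)).symm
  obtain ⟨j, -, hj⟩ := Finset.exists_lt_of_sum_lt hRS
  have hs : 0 ≤ s := (hS j ▸ le_max_right _ _).trans (hSs j)
  have hw (i : ι) : a i - t ≤ s := (le_max_left _ 0).trans (hS i ▸ hSs i)
  have hRj : 0 < R j := (hS j ▸ le_max_right _ _).trans_lt hj
  have hA : 0 < √(∑ i, R i ^ 2) + √(∑ i, S i ^ 2) :=
    add_pos_of_pos_of_nonneg (Real.sqrt_pos.2 <| (pow_pos hRj 2).trans_le <|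
      Finset.single_le_sum (fun i _ ↦ sq_nonneg (R i)) (Finset.mem_univ j)) (Real.sqrt_nonneg _)
  have hwA : ∑ i, (a i - t) ^ 2 ≤ (√(∑ i, R i ^ 2) + √(∑ i, S i ^ 2)) ^ 2 := by
    simpa only [sub_eq, add_comm] using sum_sub_sq_le_sq_sqrt_add_sqrt S R
  have sum_eq : ∑ i, (R i - S i) = -∑ i, (a i - t) := by
    simp_rw [sub_eq, ← Finset.sum_neg_distrib, neg_sub]
  have sum_nonpos : ∑ i, (a i - t) ≤ 0 := by
    simp_rw [sub_eq, Finset.sum_sub_distrib]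
    exact sub_nonpos.2 hRS.le
  rw [sum_eq] at hε
  exact (ENNReal.ofReal_le_ofReal <| sub_le_sub_left
    (sphere_real_nonneg_sum_mul_sq_le_exp hsphere hν hw hs hA hwA sum_nonpos hε) 1).trans
    (one_sub_sphere_real_nonneg_le_measure_sum_lt hsphere a _)

end Sphere

/-- Let `b ∈ ℝ^m` be uniformly distributed on the unit sphere `S^{m−1}`, and
`1 ≥ λ₁ ≥ … ≥ λ_m ≥ 0`.  Fix `g₁ ∈ (λ_m, λ₁)`, set `r_i = (g₁² − λ_i²)₊` and
`s_i = (λ_i² − g₁²)₊`, and assume `∑ r_i > ∑ s_i`.  Then `∑ λ_i² b_i² < g₁²` with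
probability at least `1 − 2e^{−ε²}`, where
`ε = ∑(r_i−s_i) / [(√(∑r_i²)+√(∑s_i²)) + √((√(∑r_i²)+√(∑s_i²))² + 2s₁∑(r_i−s_i))]`. -/
theorem stmt_4 (m : ℕ) (hm : 0 < m)
    (ν : Measure (EuclideanSpace ℝ (Fin m))) (hν : IsUniformOnSphere ν)
    (lam : Fin m → ℝ) (hmono : Antitone lam)
    (hlam1 : lam ⟨0, hm⟩ ≤ 1) (hlamm : 0 ≤ lam ⟨m - 1, by omega⟩)
    (g₁ : ℝ) (hg₁l : lam ⟨m - 1, by omega⟩ < g₁) (hg₁u : g₁ < lam ⟨0, hm⟩)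
    (R S : Fin m → ℝ)
    (hR : ∀ i, R i = max (g₁ ^ 2 - lam i ^ 2) 0)
    (hS : ∀ i, S i = max (lam i ^ 2 - g₁ ^ 2) 0)
    (hRS : ∑ i, S i < ∑ i, R i)
    (ε : ℝ)
    (hε : ε = (∑ i, (R i - S i)) /
      ((Real.sqrt (∑ i, R i ^ 2) + Real.sqrt (∑ i, S i ^ 2)) +
        Real.sqrt ((Real.sqrt (∑ i, R i ^ 2) + Real.sqrt (∑ i, S i ^ 2)) ^ 2 +
          2 * S ⟨0, hm⟩ * ∑ i, (R i - S i)))) :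
    ENNReal.ofReal (1 - 2 * Real.exp (-ε ^ 2)) ≤
      ν {b | ∑ i, lam i ^ 2 * b i ^ 2 < g₁ ^ 2} := by
  have := hν.1
  have hlam (i : Fin m) : 0 ≤ lam i :=
    hlamm.trans (hmono (Fin.mk_le_mk.2 (Nat.le_sub_one_of_lt i.2)))
  have hS_le (i : Fin m) : S i ≤ S ⟨0, hm⟩ := by
    rw [hS, hS]
    gcongr
    · exact hlam i
    · exact hmono (Nat.zero_le _)
  exact (ENNReal.ofReal_le_ofReal (by linarith [Real.exp_pos (-ε ^ 2)])).trans
    (stmt_4_general hν.2.1 hν.2.2 hR hS hS_le hRS hε)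
end

section
/- Let U and Û₁ be matrices with orthonormal columns in ℝ^M such that the columns of Û₁ are orthogonal to span(U), and let W ⊆ ℝ^M be a subspace orthogonal to span(U) with aff_∞(Û₁, W) ≤ t₁, i.e., |⟨Û₁x, w⟩| ≤ t₁‖x‖₂‖w‖₂ for all x and all w ∈ W. Then every unit ℓ₂-norm vector δ̂ ∈ span(U) ⊕ W, written as δ̂ = δ_U + δ_C with δ_U the orthogonal projection of δ̂ onto span(U) and δ_C ∈ W, satisfies ‖[U, Û₁]ᵀ δ̂‖₂² = ‖Uᵀδ̂‖₂² + ‖Û₁ᵀδ̂‖₂² ≤ 1 − (1 − t₁²)‖δ_C‖₂². -/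
open scoped RealInnerProductSpace

/-!
Since `δU ⟂ V j` and `δC ⟂ U i`, the two blocks of coefficients of `δU + δC` separate: the `U`-block
sees only `δU` and is bounded by Bessel's inequality, while the `V`-block sees only `δC`. The latter
satisfies a sharpened Bessel inequality, obtained by testing the affinity bound on the partial
orthogonal expansion of `δC` along `V`. Pythagoras then combines the two bounds.
-/

open Submodule

section

variable {𝕜 E ι κ : Type*} [RCLike 𝕜] [NormedAddCommGroup E] [InnerProductSpace 𝕜 E]

theorem mem_orthogonal_span_range_iff {v : ι → E} {w : E} :
    w ∈ (span 𝕜 (Set.range v))ᗮ ↔ ∀ i, inner 𝕜 (v i) w = 0 := by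
  rw [← span_singleton_le_iff_mem, ← isOrtho_iff_le, isOrtho_comm, isOrtho_span]
  simp only [Set.forall_mem_range, Set.mem_singleton_iff, forall_eq]

theorem inner_sum_inner_smul_self (v : ι → E) (w : E) (s : Finset ι) :
    inner 𝕜 (∑ i ∈ s, inner 𝕜 (v i) w • v i) w = ((∑ i ∈ s, ‖inner 𝕜 (v i) w‖ ^ 2 : ℝ) : 𝕜) := by
  simp only [sum_inner, inner_smul_left, RCLike.conj_mul, RCLike.ofReal_sum, RCLike.ofReal_pow]

theorem norm_sq_sum_inner_smul {v : ι → E} (hv : Orthonormal 𝕜 v) (w : E) (s : Finset ι) :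
    ‖∑ i ∈ s, inner 𝕜 (v i) w • v i‖ ^ 2 = ∑ i ∈ s, ‖inner 𝕜 (v i) w‖ ^ 2 := by
  apply RCLike.ofReal_injective (K := 𝕜)
  rw [RCLike.ofReal_pow, ← inner_self_eq_norm_sq_to_K, hv.inner_sum]
  simp only [RCLike.conj_mul, RCLike.ofReal_sum, RCLike.ofReal_pow]

theorem sum_norm_inner_sq_le_of_norm_inner_le {v : ι → E} (hv : Orthonormal 𝕜 v) {w : E} {c : ℝ}
    (h : ∀ x ∈ span 𝕜 (Set.range v), ‖inner 𝕜 x w‖ ≤ c * ‖x‖) (s : Finset ι) :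
    ∑ i ∈ s, ‖inner 𝕜 (v i) w‖ ^ 2 ≤ c ^ 2 := by
  set x := ∑ i ∈ s, inner 𝕜 (v i) w • v i
  have hx : x ∈ span 𝕜 (Set.range v) :=
    sum_mem fun i _ ↦ smul_mem _ _ (subset_span (Set.mem_range_self i))
  have hnorm : ‖x‖ ^ 2 = ∑ i ∈ s, ‖inner 𝕜 (v i) w‖ ^ 2 := norm_sq_sum_inner_smul hv w s
  have hinner : ‖inner 𝕜 x w‖ = ‖x‖ ^ 2 := by
    rw [inner_sum_inner_smul_self, ← hnorm, RCLike.norm_ofReal, abs_of_nonneg (sq_nonneg _)]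
  have hle : ‖x‖ ^ 2 ≤ c * ‖x‖ := hinner ▸ h x hx
  rw [← hnorm]
  linarith [sq_nonneg (c - ‖x‖), sub_sq c ‖x‖]

theorem stmt_9_general {U : ι → E} {V : κ → E} (hU : Orthonormal 𝕜 U) (hV : Orthonormal 𝕜 V)
    (hperp : ∀ i j, inner 𝕜 (U i) (V j) = 0) {δU δC : E} {t : ℝ}
    (haff : ∀ x ∈ span 𝕜 (Set.range V), ‖inner 𝕜 x δC‖ ≤ t * ‖x‖ * ‖δC‖)
    (hδU : δU ∈ span 𝕜 (Set.range U)) (hδC : δC ∈ (span 𝕜 (Set.range U))ᗮ)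
    (I : Finset ι) (J : Finset κ) :
    (∑ i ∈ I, ‖inner 𝕜 (U i) (δU + δC)‖ ^ 2) + ∑ j ∈ J, ‖inner 𝕜 (V j) (δU + δC)‖ ^ 2 ≤
      ‖δU + δC‖ ^ 2 - (1 - t ^ 2) * ‖δC‖ ^ 2 := by
  have hUC (i : ι) : inner 𝕜 (U i) (δU + δC) = inner 𝕜 (U i) δU := by
    rw [inner_add_right, mem_orthogonal_span_range_iff.1 hδC i, add_zero]
  have hVU (j : κ) : inner 𝕜 (V j) (δU + δC) = inner 𝕜 (V j) δC := by
    have hVperp : V j ∈ (span 𝕜 (Set.range U))ᗮ :=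
      mem_orthogonal_span_range_iff.2 fun i ↦ hperp i j
    rw [inner_add_right, inner_left_of_mem_orthogonal hδU hVperp, zero_add]
  have hpythagoras : ‖δU + δC‖ ^ 2 = ‖δU‖ ^ 2 + ‖δC‖ ^ 2 := by
    rw [norm_add_sq (𝕜 := 𝕜), inner_right_of_mem_orthogonal hδU hδC, map_zero, mul_zero, add_zero]
  have hbesselV : ∑ j ∈ J, ‖inner 𝕜 (V j) δC‖ ^ 2 ≤ (t * ‖δC‖) ^ 2 :=
    sum_norm_inner_sq_le_of_norm_inner_le hV (fun x hx ↦ (haff x hx).trans_eq (by ring)) J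
  calc (∑ i ∈ I, ‖inner 𝕜 (U i) (δU + δC)‖ ^ 2) + ∑ j ∈ J, ‖inner 𝕜 (V j) (δU + δC)‖ ^ 2
    _ = (∑ i ∈ I, ‖inner 𝕜 (U i) δU‖ ^ 2) + ∑ j ∈ J, ‖inner 𝕜 (V j) δC‖ ^ 2 := by
      simp only [hUC, hVU]
    _ ≤ ‖δU‖ ^ 2 + (t * ‖δC‖) ^ 2 := add_le_add (hU.sum_inner_products_le δU) hbesselV
    _ = ‖δU + δC‖ ^ 2 - (1 - t ^ 2) * ‖δC‖ ^ 2 := by rw [hpythagoras]; ring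

end

/-- Let `U` and `Û₁` have orthonormal columns in `ℝ^M` with the columns of
`Û₁` orthogonal to `span(U)`, and let `W` be a subspace orthogonal to `span(U)` with
`aff_∞(Û₁, W) ≤ t₁` (i.e. `|⟪x, w⟫| ≤ t₁‖x‖‖w‖` for all `x ∈ span(Û₁)` and `w ∈ W`).
Then every unit vector `δ̂ ∈ span(U) ⊕ W`, written `δ̂ = δ_U + δ_C` with `δ_U` the
orthogonal projection of `δ̂` onto `span(U)` and `δ_C ∈ W`, satisfies
`‖[U, Û₁]ᵀδ̂‖² = ∑_i ⟪U_i, δ̂⟫² + ∑_j ⟪(Û₁)_j, δ̂⟫² ≤ 1 − (1 − t₁²)‖δ_C‖²`. -/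
theorem stmt_9 (M s p : ℕ)
    (U : Fin s → EuclideanSpace ℝ (Fin M))
    (Uh₁ : Fin p → EuclideanSpace ℝ (Fin M))
    (hU : Orthonormal ℝ U) (hUh₁ : Orthonormal ℝ Uh₁)
    (hperp : ∀ i j, ⟪U i, Uh₁ j⟫ = 0)
    (W : Submodule ℝ (EuclideanSpace ℝ (Fin M)))
    (hWperp : ∀ w ∈ W, ∀ i, ⟪U i, w⟫ = 0)
    (t₁ : ℝ)
    (haff : ∀ x ∈ Submodule.span ℝ (Set.range Uh₁), ∀ w ∈ W,
      |⟪x, w⟫| ≤ t₁ * ‖x‖ * ‖w‖)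
    (δhat δU δC : EuclideanSpace ℝ (Fin M)) (hδ : ‖δhat‖ = 1)
    (hmem : δhat ∈ Submodule.span ℝ (Set.range U) ⊔ W)
    (hδU : δU = (Submodule.orthogonalProjectionOnto (Submodule.span ℝ (Set.range U)) δhat :
      EuclideanSpace ℝ (Fin M)))
    (hsplit : δhat = δU + δC) (hδCW : δC ∈ W) :
    (∑ i, ⟪U i, δhat⟫ ^ 2) + ∑ j, ⟪Uh₁ j, δhat⟫ ^ 2 ≤ 1 - (1 - t₁ ^ 2) * ‖δC‖ ^ 2 := by
  have hδUmem : δU ∈ span ℝ (Set.range U) := hδU ▸ SetLike.coe_mem _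
  have hδCperp : δC ∈ (span ℝ (Set.range U))ᗮ := mem_orthogonal_span_range_iff.2 (hWperp δC hδCW)
  simpa only [← hsplit, hδ, one_pow, Real.norm_eq_abs, sq_abs] using
    stmt_9_general hU hUh₁ hperp (fun x hx ↦ haff x hx δC hδCW) hδUmem hδCperp .univ .univ
end

section
/- Let W ⊆ ℝ^M be a linear subspace with orthogonal projection operator P, and let q ∈ ℝ^M be a unit ℓ₂-norm vector with ‖Pq‖₂ ≤ t₃ < 1 (so q − Pq ≠ 0). Set q̂ = (q − Pq)/‖q − Pq‖₂. Then for every vector δ ∈ ℝ^M with ⟨q, δ⟩ = 0, |⟨q̂, δ⟩| ≤ √(t₃²/(1 − t₃²)) · ‖Pδ‖₂; equivalently, the norm of the orthogonal projection of δ onto span(q̂) is at most √(t₃²/(1−t₃²))·‖Pδ‖₂. -/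
open scoped RealInnerProductSpace

/-!
Let `θ` be the angle between `q` and its component `q - Pq` orthogonal to the subspace. For `δ`
orthogonal to `q` we have `⟪q - Pq, δ⟫ = -⟪Pq, Pδ⟫`, so Cauchy-Schwarz bounds the component of `δ`
along `q - Pq` by `(‖Pq‖ / ‖q - Pq‖) ‖Pδ‖ = tan θ ‖Pδ‖`. A bound `sin θ = ‖Pq‖ / ‖q‖ ≤ t` then
becomes `tan θ ≤ √(t² / (1 - t²))`.
-/

section

open scoped InnerProductSpace

variable {𝕜 E : Type*} [RCLike 𝕜] [NormedAddCommGroup E] [InnerProductSpace 𝕜 E]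
  (W : Submodule 𝕜 E) [W.HasOrthogonalProjection]

theorem inner_sub_starProjection_left (x y : E) :
    ⟪x - W.starProjection x, y⟫_𝕜 =
      ⟪x, y⟫_𝕜 - ⟪W.starProjection x, W.starProjection y⟫_𝕜 := by
  have projection_idem : W.starProjection (W.starProjection x) = W.starProjection x :=
    W.starProjection_eq_self_iff.2 (W.starProjection_apply_mem x)
  rw [inner_sub_left, ← W.inner_starProjection_left_eq_right, projection_idem]

theorem norm_inner_sub_starProjection_le_of_inner_eq_zero {x y : E} (hxy : ⟪x, y⟫_𝕜 = 0) :
    ‖⟪x - W.starProjection x, y⟫_𝕜‖ ≤ ‖W.starProjection x‖ * ‖W.starProjection y‖ := by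
  rw [inner_sub_starProjection_left, hxy, zero_sub, norm_neg]
  exact norm_inner_le_norm _ _

theorem norm_sub_starProjection_sq (x : E) :
    ‖x - W.starProjection x‖ ^ 2 = ‖x‖ ^ 2 - ‖W.starProjection x‖ ^ 2 := by
  rw [W.norm_sq_eq_add_norm_sq_starProjection x, W.starProjection_orthogonal_val,
    add_sub_cancel_left]

theorem norm_starProjection_le_sqrt_mul_norm_sub_starProjection {x : E} {t : ℝ} (ht : t ^ 2 < 1)
    (hx : ‖W.starProjection x‖ ≤ t * ‖x‖) :
    ‖W.starProjection x‖ ≤ √(t ^ 2 / (1 - t ^ 2)) * ‖x - W.starProjection x‖ := by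
  have one_sub_pos : 0 < 1 - t ^ 2 := sub_pos.2 ht
  have norm_sq_le : ‖W.starProjection x‖ ^ 2 ≤ t ^ 2 * ‖x‖ ^ 2 := by
    rw [← mul_pow]
    gcongr
  refine le_of_sq_le_sq ?_ (by positivity)
  rw [mul_pow, Real.sq_sqrt (by positivity), norm_sub_starProjection_sq, div_mul_eq_mul_div,
    le_div_iff₀ one_sub_pos]
  linarith

theorem sub_starProjection_ne_zero {x : E} {t : ℝ} (hx : x ≠ 0) (ht : t < 1)
    (hxt : ‖W.starProjection x‖ ≤ t * ‖x‖) : x - W.starProjection x ≠ 0 := by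
  intro hsub
  rw [← sub_eq_zero.1 hsub] at hxt
  exact hxt.not_gt (mul_lt_of_lt_one_left (norm_pos_iff.2 hx) ht)

theorem stmt_10_general {q δ : E} {t : ℝ} (hq : q ≠ 0)
    (hPq : ‖W.starProjection q‖ ≤ t * ‖q‖) (ht : t < 1) (hδ : ⟪q, δ⟫_𝕜 = 0) :
    ‖⟪(‖q - W.starProjection q‖ : 𝕜)⁻¹ • (q - W.starProjection q), δ⟫_𝕜‖ ≤
      √(t ^ 2 / (1 - t ^ 2)) * ‖W.starProjection δ‖ := by
  have t_nonneg : 0 ≤ t :=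
    nonneg_of_mul_nonneg_left ((norm_nonneg _).trans hPq) (norm_pos_iff.2 hq)
  have t_sq_lt_one : t ^ 2 < 1 := pow_lt_one₀ t_nonneg ht two_ne_zero
  have residual_pos : 0 < ‖q - W.starProjection q‖ :=
    norm_pos_iff.2 (sub_starProjection_ne_zero W hq ht hPq)
  rw [inner_smul_left, norm_mul, RCLike.norm_conj, norm_inv, RCLike.norm_ofReal, abs_norm,
    inv_mul_le_iff₀ residual_pos]
  calc ‖⟪q - W.starProjection q, δ⟫_𝕜‖
      ≤ ‖W.starProjection q‖ * ‖W.starProjection δ‖ :=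
        norm_inner_sub_starProjection_le_of_inner_eq_zero W hδ
    _ ≤ √(t ^ 2 / (1 - t ^ 2)) * ‖q - W.starProjection q‖ * ‖W.starProjection δ‖ := by
        gcongr
        exact norm_starProjection_le_sqrt_mul_norm_sub_starProjection W t_sq_lt_one hPq
    _ = ‖q - W.starProjection q‖ * (√(t ^ 2 / (1 - t ^ 2)) * ‖W.starProjection δ‖) := by ring

end

/-- Let `W ⊆ ℝ^M` be a subspace with orthogonal projection `P`, and let `q`
be a unit vector with `‖Pq‖ ≤ t₃ < 1`.  Set `q̂ = (q − Pq)/‖q − Pq‖`.  Then every `δ` with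
`⟪q, δ⟫ = 0` satisfies `|⟪q̂, δ⟫| ≤ √(t₃²/(1 − t₃²)) · ‖Pδ‖`. -/
theorem stmt_10 (M : ℕ) (W : Submodule ℝ (EuclideanSpace ℝ (Fin M)))
    (q : EuclideanSpace ℝ (Fin M)) (t₃ : ℝ) (hq : ‖q‖ = 1)
    (hPq : ‖(Submodule.orthogonalProjectionOnto W q : EuclideanSpace ℝ (Fin M))‖ ≤ t₃) (ht₃ : t₃ < 1)
    (δ : EuclideanSpace ℝ (Fin M)) (hδ : ⟪q, δ⟫ = 0) :
    |⟪(‖q - (Submodule.orthogonalProjectionOnto W q : EuclideanSpace ℝ (Fin M))‖)⁻¹ •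
        (q - (Submodule.orthogonalProjectionOnto W q : EuclideanSpace ℝ (Fin M))), δ⟫| ≤
      Real.sqrt (t₃ ^ 2 / (1 - t₃ ^ 2)) *
        ‖(Submodule.orthogonalProjectionOnto W δ : EuclideanSpace ℝ (Fin M))‖ := by
  have q_ne_zero : q ≠ 0 := norm_ne_zero_iff.1 (by simp [hq])
  exact stmt_10_general W q_ne_zero (by simpa [hq] using hPq) ht₃ hδ
end

section
/- Under the deterministic data model with t₂ ≤ 1/2, let δ be any nonzero vector in S_{-1} = ⊕_{k=2}^K S_k, and let δ_C denote the component of δ/‖δ‖₂ orthogonal to span(U). Then the ℓ₁-norm of the inner products of δ with the columns of D_{-1} satisfies Σ_{columns d of D_{-1}} |δᵀd| ≥ h₁ · ‖δ‖₂ · √( (K−1) − [K−2 + (K−2)t₂]·‖δ_C‖₂² ). -/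
open scoped RealInnerProductSpace
open Finset

/-!
Let `w` and `v` be the components of `δ` along the common part `U` and orthogonal to it. Since `U`
is orthogonal to each innovation space `V k`, the projection of `δ` to the cluster space `U ⊔ V k`
is `w + P k v`, with `P k` the projection to `V k`, and only this projection contributes to the
inner products of `δ` with the columns of cluster `k`. Hence their `ℓ¹`-norm is at least
`h * √(‖w‖² + ‖P k v‖²)`. Over `n` clusters, the triangle inequality in the plane bounds the sum of
these square roots from below by `√(n²‖w‖² + (∑ ‖P k v‖)²)`. Finally `v ∈ ⨆ k, V k`, and the Gram
matrix of its summands is diagonally dominant up to the affinity `t`, which yields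
`∑ ‖P k v‖² ≥ (1 - (n - 1) t) ‖v‖²`.
-/

section

open scoped InnerProductSpace

variable {𝕜 E ι κ : Type*} [RCLike 𝕜] [NormedAddCommGroup E] [InnerProductSpace 𝕜 E]

/-- The affinity of two subspaces (the cosine of their smallest principal angle) is at most `t`.
Stating the bound on all pairs of vectors avoids a supremum over unit spheres, which are empty in
the zero subspace. -/
def AffinityLE (t : ℝ) (V W : Submodule 𝕜 E) : Prop :=
  ∀ x ∈ V, ∀ y ∈ W, ‖⟪x, y⟫_𝕜‖ ≤ t * ‖x‖ * ‖y‖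

theorem mul_sum_norm_sq_le_norm_sum_sq {I : Finset κ} {x : κ → E} {t : ℝ} (ht : 0 ≤ t)
    (hx : (I : Set κ).Pairwise fun k l ↦ ‖⟪x k, x l⟫_𝕜‖ ≤ t * ‖x k‖ * ‖x l‖) :
    (1 - ((#I : ℝ) - 1) * t) * ∑ k ∈ I, ‖x k‖ ^ 2 ≤ ‖∑ k ∈ I, x k‖ ^ 2 := by
  classical
  have entry_ge (k l : κ) (hk : k ∈ I) (hl : l ∈ I) :
      (if k = l then (1 + t) * ‖x k‖ ^ 2 else 0) - t * (‖x k‖ * ‖x l‖) ≤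
        RCLike.re ⟪x k, x l⟫_𝕜 := by
    rcases eq_or_ne k l with rfl | hkl
    · rw [if_pos rfl, inner_self_eq_norm_sq]
      linarith
    · rw [if_neg hkl]
      linarith [hx hk hl hkl, (abs_le.1 (RCLike.abs_re_le_norm ⟪x k, x l⟫_𝕜)).1]
  calc (1 - ((#I : ℝ) - 1) * t) * ∑ k ∈ I, ‖x k‖ ^ 2
      ≤ (1 + t) * ∑ k ∈ I, ‖x k‖ ^ 2 - t * (∑ k ∈ I, ‖x k‖) ^ 2 := by
        linarith [mul_le_mul_of_nonneg_left
          (sq_sum_le_card_mul_sum_sq (s := I) (f := fun k ↦ ‖x k‖)) ht]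
    _ = ∑ k ∈ I, ∑ l ∈ I,
          ((if k = l then (1 + t) * ‖x k‖ ^ 2 else 0) - t * (‖x k‖ * ‖x l‖)) := by
        simp only [sum_sub_distrib, sum_ite_eq, sum_ite_mem, inter_self, ← mul_sum,
          sq (∑ k ∈ I, ‖x k‖), sum_mul_sum]
    _ ≤ ∑ k ∈ I, ∑ l ∈ I, RCLike.re ⟪x k, x l⟫_𝕜 :=
        sum_le_sum fun k hk ↦ sum_le_sum fun l hl ↦ entry_ge k l hk hl
    _ = ‖∑ k ∈ I, x k‖ ^ 2 := by
        rw [← inner_self_eq_norm_sq (𝕜 := 𝕜), sum_inner]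
        simp only [inner_sum, map_sum]

theorem mul_norm_sq_le_sum_norm_starProjection_sq {I : Finset κ} {V : κ → Submodule 𝕜 E}
    [∀ k, (V k).HasOrthogonalProjection] {t : ℝ} (ht : 0 ≤ t)
    (hV : (I : Set κ).Pairwise fun k l ↦ AffinityLE t (V k) (V l))
    {v : E} (hv : v ∈ ⨆ k ∈ I, V k) :
    (1 - ((#I : ℝ) - 1) * t) * ‖v‖ ^ 2 ≤ ∑ k ∈ I, ‖(V k).starProjection v‖ ^ 2 := by
  obtain ⟨x, rfl⟩ := (Submodule.mem_iSup_finset_iff_exists_sum V v).1 hv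
  set v : E := ∑ k ∈ I, (x k : E)
  set β : ℝ := 1 - ((#I : ℝ) - 1) * t
  set X : ℝ := ∑ k ∈ I, ‖(x k : E)‖ ^ 2
  set Q : ℝ := ∑ k ∈ I, ‖(V k).starProjection v‖ ^ 2
  have hQ : 0 ≤ Q := sum_nonneg fun _ _ ↦ sq_nonneg _
  have gram_bound : β * X ≤ ‖v‖ ^ 2 := mul_sum_norm_sq_le_norm_sum_sq (𝕜 := 𝕜) ht
    fun k hk l hl hkl ↦ hV hk hl hkl _ (x k).2 _ (x l).2
  have norm_sq_le : ‖v‖ ^ 2 ≤ ∑ k ∈ I, ‖(x k : E)‖ * ‖(V k).starProjection v‖ :=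
    calc ‖v‖ ^ 2 = ∑ k ∈ I, RCLike.re ⟪(x k : E), v⟫_𝕜 := by
          rw [← inner_self_eq_norm_sq (𝕜 := 𝕜) v, ← map_sum, ← sum_inner]
      _ = ∑ k ∈ I, RCLike.re ⟪(x k : E), (V k).starProjection v⟫_𝕜 := by
          refine sum_congr rfl fun k _ ↦ ?_
          rw [← Submodule.inner_starProjection_left_eq_right,
            Submodule.starProjection_eq_self_iff.2 (x k).2]
      _ ≤ _ := sum_le_sum fun _ _ ↦ re_inner_le_norm _ _
  have cauchy_schwarz : (‖v‖ ^ 2) ^ 2 ≤ X * Q :=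
    (pow_le_pow_left₀ (sq_nonneg _) norm_sq_le 2).trans (sum_mul_sq_le_sq_mul_sq I _ _)
  rcases le_or_gt (β * ‖v‖ ^ 2) 0 with hβv | hβv
  · exact hβv.trans hQ
  have hv_pos : 0 < ‖v‖ ^ 2 := (sq_nonneg _).lt_of_ne fun h ↦ by simp [← h] at hβv
  have hβ : 0 < β := pos_of_mul_pos_left hβv hv_pos.le
  refine le_of_mul_le_mul_left ?_ hv_pos
  calc ‖v‖ ^ 2 * (β * ‖v‖ ^ 2) = β * (‖v‖ ^ 2) ^ 2 := by ring
    _ ≤ β * (X * Q) := mul_le_mul_of_nonneg_left cauchy_schwarz hβ.le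
    _ = β * X * Q := by ring
    _ ≤ ‖v‖ ^ 2 * Q := mul_le_mul_of_nonneg_right gram_bound hQ

theorem sqrt_sum_sq_add_sum_sq_le_sum_sqrt (I : Finset κ) (a b : κ → ℝ) :
    √((∑ k ∈ I, a k) ^ 2 + (∑ k ∈ I, b k) ^ 2) ≤ ∑ k ∈ I, √(a k ^ 2 + b k ^ 2) := by
  simpa only [← Complex.norm_add_mul_I, Complex.ofReal_sum, sum_mul, sum_add_distrib] using
    norm_sum_le I fun k ↦ (a k + b k * Complex.I : ℂ)

theorem mul_norm_le_sum_norm_inner_of_sub_mem_orthogonal {F : Submodule 𝕜 E} {J : Finset ι}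
    {d : ι → E} {h : ℝ} (hF : ∀ x ∈ F, ‖x‖ = 1 → h ≤ ∑ j ∈ J, ‖⟪x, d j⟫_𝕜‖)
    (hd : ∀ j ∈ J, d j ∈ F) {x y : E} (hy : y ∈ F) (hxy : x - y ∈ Fᗮ) :
    h * ‖y‖ ≤ ∑ j ∈ J, ‖⟪x, d j⟫_𝕜‖ := by
  have inner_eq : ∀ j ∈ J, ⟪x, d j⟫_𝕜 = ⟪y, d j⟫_𝕜 := fun j hj ↦ by
    rw [← sub_eq_zero, ← inner_sub_left, Submodule.inner_left_of_mem_orthogonal (hd j hj) hxy]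
  rw [sum_congr rfl fun j hj ↦ congrArg norm (inner_eq j hj)]
  rcases eq_or_ne y 0 with rfl | hy0
  · simp
  have hy_pos : 0 < ‖y‖ := norm_pos_iff.2 hy0
  have unit_bound := hF _ (F.smul_mem ((‖y‖⁻¹ : ℝ) : 𝕜) hy) (by
    rw [norm_smul, RCLike.norm_ofReal, abs_inv, abs_norm, inv_mul_cancel₀ hy_pos.ne'])
  simp only [inner_smul_left, RCLike.conj_ofReal, norm_mul, RCLike.norm_ofReal, abs_inv,
    abs_norm, ← mul_sum] at unit_bound
  rwa [inv_mul_eq_div, le_div_iff₀ hy_pos] at unit_bound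

section Orthogonal

variable {U V : Submodule 𝕜 E} [U.HasOrthogonalProjection]

theorem starProjection_orthogonal_mem_of_mem_sup (hUV : U ⟂ V) {x : E} (hx : x ∈ U ⊔ V) :
    Uᗮ.starProjection x ∈ V := by
  obtain ⟨u, hu, v, hv, rfl⟩ := Submodule.mem_sup.1 hx
  rwa [map_add, Submodule.starProjection_orthogonal_apply_eq_zero hu, zero_add,
    Submodule.starProjection_eq_self_iff.2 (hUV.ge hv)]

variable [V.HasOrthogonalProjection]

theorem starProjection_starProjection_orthogonal (hUV : U ⟂ V) (x : E) :
    V.starProjection (Uᗮ.starProjection x) = V.starProjection x := by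
  have : V.starProjection (U.starProjection x) = 0 :=
    DFunLike.congr_fun hUV.symm.starProjection_comp_starProjection x
  rw [Submodule.starProjection_orthogonal_val, map_sub, this, sub_zero]

theorem sub_starProjection_add_starProjection_mem_orthogonal_sup (hUV : U ⟂ V) (x : E) :
    x - (U.starProjection x + V.starProjection x) ∈ (U ⊔ V)ᗮ := by
  rw [← Submodule.inf_orthogonal]
  constructor
  · rw [← sub_sub]
    exact sub_mem (U.sub_starProjection_mem_orthogonal x) (hUV.ge (V.starProjection_apply_mem x))
  · rw [add_comm, ← sub_sub]
    exact sub_mem (V.sub_starProjection_mem_orthogonal x) (hUV.le (U.starProjection_apply_mem x))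

theorem norm_starProjection_add_starProjection (hUV : U ⟂ V) (x : E) :
    ‖U.starProjection x + V.starProjection x‖ =
      √(‖U.starProjection x‖ ^ 2 + ‖V.starProjection x‖ ^ 2) := by
  have inner_eq_zero :=
    hUV.inner_eq (U.starProjection_apply_mem x) (V.starProjection_apply_mem x)
  rw [eq_comm, Real.sqrt_eq_iff_mul_self_eq (by positivity) (norm_nonneg _),
    norm_add_sq_eq_norm_sq_add_norm_sq_of_inner_eq_zero _ _ inner_eq_zero, sq, sq]

end Orthogonal

variable {U : Submodule 𝕜 E} [U.HasOrthogonalProjection] {V : κ → Submodule 𝕜 E}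
  [∀ k, (V k).HasOrthogonalProjection]

theorem sqrt_le_sum_norm_starProjection_add_starProjection {I : Finset κ} (hUV : ∀ k ∈ I, U ⟂ V k)
    {t : ℝ} (ht : 0 ≤ t) (hV : (I : Set κ).Pairwise fun k l ↦ AffinityLE t (V k) (V l))
    {x : E} (hx : x ∈ ⨆ k ∈ I, U ⊔ V k) :
    √(#I * ‖x‖ ^ 2 - ((#I : ℝ) - 1) * (1 + t) * ‖Uᗮ.starProjection x‖ ^ 2) ≤
      ∑ k ∈ I, ‖U.starProjection x + (V k).starProjection x‖ := by
  set w := U.starProjection x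
  set v := Uᗮ.starProjection x with hv_def
  have cluster_le : (⨆ k ∈ I, U ⊔ V k) ≤ U ⊔ ⨆ k ∈ I, V k :=
    iSup₂_le fun _ hk ↦ sup_le_sup_left (le_biSup V hk) U
  have isOrtho_iSup : U ⟂ ⨆ k ∈ I, V k := by
    simpa only [Submodule.isOrtho_iSup_right] using hUV
  have hv : v ∈ ⨆ k ∈ I, V k :=
    starProjection_orthogonal_mem_of_mem_sup isOrtho_iSup (cluster_le hx)
  have pythagoras : ‖x‖ ^ 2 = ‖w‖ ^ 2 + ‖v‖ ^ 2 := U.norm_sq_eq_add_norm_sq_starProjection x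
  have innovation_bound : (1 - ((#I : ℝ) - 1) * t) * ‖v‖ ^ 2 ≤
      (∑ k ∈ I, ‖(V k).starProjection x‖) ^ 2 := by
    calc _ ≤ ∑ k ∈ I, ‖(V k).starProjection v‖ ^ 2 :=
          mul_norm_sq_le_sum_norm_starProjection_sq ht hV hv
      _ = ∑ k ∈ I, ‖(V k).starProjection x‖ ^ 2 :=
          sum_congr rfl fun k hk ↦ by
            rw [hv_def, starProjection_starProjection_orthogonal (hUV k hk)]
      _ ≤ _ := sum_sq_le_sq_sum_of_nonneg fun _ _ ↦ norm_nonneg _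
  have card_le_card_sq : (#I : ℝ) ≤ (#I : ℝ) ^ 2 := by
    exact_mod_cast Nat.le_self_pow two_ne_zero #I
  calc √(#I * ‖x‖ ^ 2 - ((#I : ℝ) - 1) * (1 + t) * ‖v‖ ^ 2)
      = √(#I * ‖w‖ ^ 2 + (1 - ((#I : ℝ) - 1) * t) * ‖v‖ ^ 2) := by
        rw [pythagoras]
        ring_nf
    _ ≤ √((#I * ‖w‖) ^ 2 + (∑ k ∈ I, ‖(V k).starProjection x‖) ^ 2) := by
        rw [mul_pow]
        gcongr
    _ ≤ ∑ k ∈ I, √(‖w‖ ^ 2 + ‖(V k).starProjection x‖ ^ 2) := by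
        simpa only [sum_const, nsmul_eq_mul] using sqrt_sum_sq_add_sum_sq_le_sum_sqrt I
          (fun _ ↦ ‖w‖) fun k ↦ ‖(V k).starProjection x‖
    _ = ∑ k ∈ I, ‖w + (V k).starProjection x‖ :=
        sum_congr rfl fun k hk ↦ (norm_starProjection_add_starProjection (hUV k hk) x).symm

theorem stmt_11_general [Fintype ι] [Fintype κ] [DecidableEq κ] {d : ι → E} {label : ι → κ}
    {k₀ : κ} (hUV : ∀ k ≠ k₀, U ⟂ V k) (hd : ∀ j, label j ≠ k₀ → d j ∈ U ⊔ V (label j))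
    {h t : ℝ} (ht : 0 ≤ t)
    (hh : ∀ k ≠ k₀, ∀ x ∈ U ⊔ V k, ‖x‖ = 1 → h ≤ ∑ j with label j = k, ‖⟪x, d j⟫_𝕜‖)
    (hV : ∀ k ≠ k₀, ∀ l ≠ k₀, k ≠ l → AffinityLE t (V k) (V l))
    {δ : E} (hδ : δ ∈ ⨆ k, ⨆ (_ : k ≠ k₀), U ⊔ V k) :
    h * √(((Fintype.card κ : ℝ) - 1) * ‖δ‖ ^ 2 -
        ((Fintype.card κ : ℝ) - 2 + ((Fintype.card κ : ℝ) - 2) * t) *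
          ‖Uᗮ.starProjection δ‖ ^ 2) ≤
      ∑ j with label j ≠ k₀, ‖⟪δ, d j⟫_𝕜‖ := by
  rcases le_or_gt h 0 with hh0 | hh0
  · exact (mul_nonpos_of_nonpos_of_nonneg hh0 (Real.sqrt_nonneg _)).trans
      (sum_nonneg fun _ _ ↦ norm_nonneg _)
  have hcard : (#(univ.erase k₀) : ℝ) = Fintype.card κ - 1 := by
    rw [cast_card_erase_of_mem (mem_univ k₀), card_univ]
  have sqrt_le := sqrt_le_sum_norm_starProjection_add_starProjection (I := univ.erase k₀)
    (fun k hk ↦ hUV k (ne_of_mem_erase hk)) ht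
    (fun k hk l hl ↦ hV k (ne_of_mem_erase hk) l (ne_of_mem_erase hl))
    (by simpa only [mem_erase, mem_univ, and_true] using hδ)
  have cluster_bound : ∀ k ≠ k₀, h * ‖U.starProjection δ + (V k).starProjection δ‖ ≤
      ∑ j with label j = k, ‖⟪δ, d j⟫_𝕜‖ := fun k hk ↦
    mul_norm_le_sum_norm_inner_of_sub_mem_orthogonal (hh k hk)
      (fun j hj ↦ by obtain rfl := (mem_filter.1 hj).2; exact hd j hk)
      (Submodule.add_mem_sup (U.starProjection_apply_mem δ) ((V k).starProjection_apply_mem δ))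
      (sub_starProjection_add_starProjection_mem_orthogonal_sup (hUV k hk) δ)
  calc _ = h * √(#(univ.erase k₀) * ‖δ‖ ^ 2 -
          ((#(univ.erase k₀) : ℝ) - 1) * (1 + t) * ‖Uᗮ.starProjection δ‖ ^ 2) := by
        rw [hcard]
        ring_nf
    _ ≤ h * ∑ k ∈ univ.erase k₀, ‖U.starProjection δ + (V k).starProjection δ‖ :=
        mul_le_mul_of_nonneg_left sqrt_le hh0.le
    _ ≤ ∑ k ∈ univ.erase k₀, ∑ j with label j = k, ‖⟪δ, d j⟫_𝕜‖ := by
        rw [mul_sum]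
        exact sum_le_sum fun k hk ↦ cluster_bound k (ne_of_mem_erase hk)
    _ = ∑ j with label j ≠ k₀, ‖⟪δ, d j⟫_𝕜‖ := by
        simp only [sum_fiberwise_eq_sum_filter, mem_erase, mem_univ, and_true]

end

theorem norm_mul_sqrt_sub_norm_map_normalize_sq {G F : Type*} [NormedAddCommGroup G]
    [NormedSpace ℝ G] [SeminormedAddCommGroup F] [NormedSpace ℝ F] (T : G →ₗ[ℝ] F) (a b : ℝ)
    (x : G) :
    ‖x‖ * √(a - b * ‖T (‖x‖⁻¹ • x)‖ ^ 2) = √(a * ‖x‖ ^ 2 - b * ‖T x‖ ^ 2) := by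
  rcases eq_or_ne x 0 with rfl | hx
  · simp
  have hx' : ‖x‖ ≠ 0 := norm_ne_zero_iff.2 hx
  rw [← Real.sqrt_sq (norm_nonneg x), ← Real.sqrt_mul (sq_nonneg _), Real.sqrt_sq (norm_nonneg x),
    map_smul, norm_smul, norm_inv, norm_norm]
  congr 1
  field_simp

/-- deterministic model, lower bound for out-of-cluster inner products:
columns `d j` of `D` are unit vectors in the union of `K` subspaces
`S k = span[U, Û_k]`; the cluster `S₁` is indexed by `0 : Fin K`.  `h₁` is a lower bound
for `‖δᵀD_k‖₁` over unit `δ ∈ S k`, and the pairwise affinities of the innovation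
components satisfy `aff_∞(Û_i, Û_j) ≤ t₂ ≤ 1/2`.  For any nonzero `δ ∈ S_{−1} = ⊕_{k≥2} S k`,
with `δ_C` the component of `δ/‖δ‖` orthogonal to `span U`,
`∑_{columns of D_{−1}} |δᵀd| ≥ h₁‖δ‖√((K−1) − [K−2+(K−2)t₂]‖δ_C‖²)`. -/
theorem stmt_11 (Mdim N K s : ℕ) [NeZero K] (p : Fin K → ℕ)
    (U : Fin s → EuclideanSpace ℝ (Fin Mdim))
    (Uh : (k : Fin K) → Fin (p k) → EuclideanSpace ℝ (Fin Mdim))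
    (hU : Orthonormal ℝ U)
    (hUh : ∀ k, Orthonormal ℝ (Uh k))
    (hperp : ∀ k j i, ⟪U i, Uh k j⟫ = 0)
    (S : Fin K → Submodule ℝ (EuclideanSpace ℝ (Fin Mdim)))
    (hS : ∀ k, S k = Submodule.span ℝ (Set.range U ∪ Set.range (Uh k)))
    (d : Fin N → EuclideanSpace ℝ (Fin Mdim))
    (label : Fin N → Fin K)
    (hdnorm : ∀ j, ‖d j‖ = 1)
    (hdmem : ∀ j, d j ∈ S (label j))
    (h₁ t₂ : ℝ) (ht₂0 : 0 ≤ t₂) (ht₂ : t₂ ≤ 1 / 2)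
    (hh₁ : ∀ k, ∀ δ ∈ S k, ‖δ‖ = 1 →
      h₁ ≤ ∑ j ∈ univ.filter (fun j => label j = k), |⟪δ, d j⟫|)
    (haff₂ : ∀ k l : Fin K, k ≠ l → ∀ x ∈ Submodule.span ℝ (Set.range (Uh k)),
      ∀ y ∈ Submodule.span ℝ (Set.range (Uh l)), |⟪x, y⟫| ≤ t₂ * ‖x‖ * ‖y‖)
    (δ : EuclideanSpace ℝ (Fin Mdim)) (hδ0 : δ ≠ 0)
    (hδmem : δ ∈ ⨆ k, ⨆ (_ : k ≠ (0 : Fin K)), S k)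
    (δC : EuclideanSpace ℝ (Fin Mdim))
    (hδC : δC = ‖δ‖⁻¹ • δ -
      (Submodule.orthogonalProjectionOnto (Submodule.span ℝ (Set.range U)) (‖δ‖⁻¹ • δ) :
        EuclideanSpace ℝ (Fin Mdim))) :
    h₁ * ‖δ‖ * Real.sqrt (((K : ℝ) - 1) -
        ((K : ℝ) - 2 + ((K : ℝ) - 2) * t₂) * ‖δC‖ ^ 2) ≤
      ∑ j ∈ univ.filter (fun j => label j ≠ (0 : Fin K)), |⟪δ, d j⟫| := by
  have hδC' : δC = (Submodule.span ℝ (Set.range U))ᗮ.starProjection (‖δ‖⁻¹ • δ) :=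
    hδC.trans (Submodule.starProjection_orthogonal_val _).symm
  obtain rfl : S = fun k ↦ Submodule.span ℝ (Set.range U) ⊔ Submodule.span ℝ (Set.range (Uh k)) :=
    funext fun k ↦ by rw [hS, Submodule.span_union]
  have isOrtho_span (k : Fin K) :
      Submodule.span ℝ (Set.range U) ⟂ Submodule.span ℝ (Set.range (Uh k)) :=
    Submodule.isOrtho_span.2 (by rintro _ ⟨i, rfl⟩ _ ⟨j, rfl⟩; exact hperp k j i)
  rw [hδC', mul_assoc, ← ContinuousLinearMap.coe_coe, norm_mul_sqrt_sub_norm_map_normalize_sq]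
  simpa only [Fintype.card_fin, Real.norm_eq_abs, ContinuousLinearMap.coe_coe] using
    stmt_11_general (𝕜 := ℝ) (fun k _ ↦ isOrtho_span k) (fun j _ ↦ hdmem j) ht₂0
      (fun k _ ↦ hh₁ k) (fun k _ l _ ↦ haff₂ k l) hδmem
end

section
/- Under the deterministic data model, let δ be any nonzero vector in S_{-1} = ⊕_{k=2}^K S_k, let δ_C denote the component of δ/‖δ‖₂ orthogonal to span(U), and suppose aff_∞(Û₁, Û_{-1}) ≤ t₁, where Û_{-1} is an orthonormal basis matrix of ⊕_{k=2}^K span(Û_k). Then the ℓ₁-norm of the inner products of δ with the columns of D₁ satisfies Σ_{columns d of D₁} |δᵀd| ≤ h₂ · ‖δ‖₂ · √( 1 + (t₁² − 1)·‖δ_C‖₂² ). -/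
open scoped RealInnerProductSpace
open Finset

/-!
Let `W = span U`, let `V₁ = span Û₁`, and let `V₋₁` be the span of the remaining `Û_k`. The inner
products of `δ ∈ W ⊕ V₋₁` with points of `S₁ = W ⊕ V₁` only see the orthogonal projection of `δ`
onto `S₁`, which is `P_W δ + P_{V₁} δ`. Since `δ - P_W δ` lies in `V₋₁`, its projection onto `V₁`,
which is `P_{V₁} δ`, has norm at most `t ‖δ - P_W δ‖`, and Pythagoras gives
`‖P_W δ + P_{V₁} δ‖² ≤ ‖P_W δ‖² + t² ‖δ - P_W δ‖² = ‖δ‖² + (t² - 1) ‖δ - P_W δ‖²`.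
-/

section

variable {𝕜 E : Type*} [RCLike 𝕜] [NormedAddCommGroup E] [InnerProductSpace 𝕜 E]

open scoped InnerProductSpace

section Projections

variable {U V W : Submodule 𝕜 E}

lemma norm_starProjection_le_of_norm_inner_le [U.HasOrthogonalProjection] {y : E} {c : ℝ}
    (hc : 0 ≤ c) (h : ∀ x ∈ U, ‖⟪x, y⟫_𝕜‖ ≤ c * ‖x‖) : ‖U.starProjection y‖ ≤ c := by
  set x := U.starProjection y
  have hx : x ∈ U := U.starProjection_apply_mem y
  have h_inner : ⟪x, y⟫_𝕜 = ⟪x, x⟫_𝕜 := by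
    rw [← sub_eq_zero, ← inner_sub_right]
    exact U.sub_starProjection_mem_orthogonal y x hx
  have h_sq : ‖x‖ * ‖x‖ ≤ c * ‖x‖ := by
    simpa only [h_inner, inner_self_eq_norm_sq_to_K, norm_pow, RCLike.norm_ofReal, abs_norm,
      sq ‖x‖]
      using h x hx
  rcases (norm_nonneg x).eq_or_lt' with h_zero | h_pos
  · rwa [h_zero]
  · exact le_of_mul_le_mul_right h_sq h_pos

lemma sub_starProjection_mem_of_mem_sup [W.HasOrthogonalProjection] (hWV : W ⟂ V) {x : E}
    (hx : x ∈ W ⊔ V) : x - W.starProjection x ∈ V := by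
  obtain ⟨w, hw, v, hv, rfl⟩ := Submodule.mem_sup.1 hx
  rwa [Submodule.eq_starProjection_of_mem_orthogonal' hw (hWV.ge hv) rfl, add_sub_cancel_left]

lemma inner_starProjection_add_starProjection_of_mem_sup [U.HasOrthogonalProjection]
    [V.HasOrthogonalProjection] (hUV : U ⟂ V) (x : E) {y : E} (hy : y ∈ U ⊔ V) :
    ⟪U.starProjection x + V.starProjection x, y⟫_𝕜 = ⟪x, y⟫_𝕜 := by
  obtain ⟨u, hu, v, hv, rfl⟩ := Submodule.mem_sup.1 hy
  rw [inner_add_left, Submodule.inner_starProjection_left_eq_right,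
    Submodule.inner_starProjection_left_eq_right, map_add, map_add,
    Submodule.starProjection_eq_self_iff.2 hu, Submodule.starProjection_eq_self_iff.2 hv,
    U.starProjection_apply_eq_zero_iff.2 (hUV.ge hv),
    V.starProjection_apply_eq_zero_iff.2 (hUV.le hu), add_zero, zero_add, inner_add_right]

lemma sq_norm_starProjection_add_starProjection_le [W.HasOrthogonalProjection]
    [U.HasOrthogonalProjection] (hWU : W ⟂ U) (hWV : W ⟂ V) {t : ℝ} (ht : 0 ≤ t)
    (hUV : ∀ x ∈ U, ∀ y ∈ V, ‖⟪x, y⟫_𝕜‖ ≤ t * ‖x‖ * ‖y‖) {x : E} (hx : x ∈ W ⊔ V) :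
    ‖W.starProjection x + U.starProjection x‖ ^ 2 ≤
      ‖x‖ ^ 2 + (t ^ 2 - 1) * ‖x - W.starProjection x‖ ^ 2 := by
  set v := x - W.starProjection x
  have hv : v ∈ V := sub_starProjection_mem_of_mem_sup hWV hx
  have hU_eq : U.starProjection x = U.starProjection v := by
    rw [map_sub, U.starProjection_apply_eq_zero_iff.2
      (hWU.le (W.starProjection_apply_mem x)), sub_zero]
  have hU_le : ‖U.starProjection x‖ ≤ t * ‖v‖ := by
    rw [hU_eq]
    refine norm_starProjection_le_of_norm_inner_le (by positivity) fun u hu ↦ ?_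
    simpa only [mul_right_comm] using hUV u hu v hv
  have h_proj : ‖W.starProjection x + U.starProjection x‖ ^ 2 =
      ‖W.starProjection x‖ ^ 2 + ‖U.starProjection x‖ ^ 2 := by
    simpa only [sq] using norm_add_sq_eq_norm_sq_add_norm_sq_of_inner_eq_zero _ _
      (hWU.inner_eq (W.starProjection_apply_mem x) (U.starProjection_apply_mem x))
  have h_split : ‖x‖ ^ 2 = ‖W.starProjection x‖ ^ 2 + ‖v‖ ^ 2 := by
    rw [Submodule.norm_sq_eq_add_norm_sq_starProjection x W, W.starProjection_orthogonal_val]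
  calc ‖W.starProjection x + U.starProjection x‖ ^ 2
      ≤ ‖W.starProjection x‖ ^ 2 + (t * ‖v‖) ^ 2 := by rw [h_proj]; gcongr
    _ = ‖x‖ ^ 2 + (t ^ 2 - 1) * ‖v‖ ^ 2 := by rw [h_split]; ring

end Projections

section SumInner

variable {ι : Type*} {J : Finset ι} {d : ι → E} {h : ℝ}

lemma sum_norm_inner_le_mul_norm_of_unit {S : Submodule 𝕜 E}
    (hS : ∀ x ∈ S, ‖x‖ = 1 → ∑ j ∈ J, ‖⟪x, d j⟫_𝕜‖ ≤ h) {x : E} (hx : x ∈ S) :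
    ∑ j ∈ J, ‖⟪x, d j⟫_𝕜‖ ≤ h * ‖x‖ := by
  rcases eq_or_ne x 0 with rfl | hx0
  · simp
  have h_unit := hS ((‖x‖⁻¹ : 𝕜) • x) (S.smul_mem _ hx) (norm_smul_inv_norm hx0)
  simp only [inner_smul_left, norm_mul, RCLike.norm_conj, norm_inv, RCLike.norm_ofReal, abs_norm,
    ← mul_sum] at h_unit
  rwa [inv_mul_le_iff₀' (norm_pos_iff.2 hx0)] at h_unit

lemma sum_norm_inner_le_mul_sqrt {U V W : Submodule 𝕜 E} [W.HasOrthogonalProjection]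
    [U.HasOrthogonalProjection] (hWU : W ⟂ U) (hWV : W ⟂ V) (hd : ∀ j ∈ J, d j ∈ W ⊔ U)
    (hh : 0 ≤ h) (hJ : ∀ x ∈ W ⊔ U, ∑ j ∈ J, ‖⟪x, d j⟫_𝕜‖ ≤ h * ‖x‖) {t : ℝ} (ht : 0 ≤ t)
    (hUV : ∀ x ∈ U, ∀ y ∈ V, ‖⟪x, y⟫_𝕜‖ ≤ t * ‖x‖ * ‖y‖) {x : E} (hx : x ∈ W ⊔ V) :
    ∑ j ∈ J, ‖⟪x, d j⟫_𝕜‖ ≤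
      h * √(‖x‖ ^ 2 + (t ^ 2 - 1) * ‖x - W.starProjection x‖ ^ 2) := by
  set q := W.starProjection x + U.starProjection x
  have hq : q ∈ W ⊔ U :=
    Submodule.add_mem_sup (W.starProjection_apply_mem x) (U.starProjection_apply_mem x)
  calc ∑ j ∈ J, ‖⟪x, d j⟫_𝕜‖ = ∑ j ∈ J, ‖⟪q, d j⟫_𝕜‖ := sum_congr rfl fun j hj ↦ by
        rw [inner_starProjection_add_starProjection_of_mem_sup hWU x (hd j hj)]
    _ ≤ h * ‖q‖ := hJ q hq
    _ ≤ _ := by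
        gcongr
        exact Real.le_sqrt_of_sq_le
          (sq_norm_starProjection_add_starProjection_le hWU hWV ht hUV hx)

end SumInner

theorem stmt_12_general {ι κ : Type*} [Fintype ι] [DecidableEq κ] (W : Submodule 𝕜 E)
    (V : κ → Submodule 𝕜 E) (k₀ : κ) [W.HasOrthogonalProjection]
    [(V k₀).HasOrthogonalProjection] (hWV : ∀ k, W ⟂ V k) (d : ι → E) (label : ι → κ)
    (hd : ∀ j, d j ∈ W ⊔ V (label j)) (h t : ℝ) (ht : 0 ≤ t)
    (hh : ∀ k, ∀ x ∈ W ⊔ V k, ‖x‖ = 1 → ∑ j with label j = k, ‖⟪x, d j⟫_𝕜‖ ≤ h)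
    (haff : ∀ x ∈ V k₀, ∀ y ∈ ⨆ k ≠ k₀, V k, ‖⟪x, y⟫_𝕜‖ ≤ t * ‖x‖ * ‖y‖)
    (δ : E) (hδ0 : δ ≠ 0) (hδ : δ ∈ ⨆ k ≠ k₀, W ⊔ V k)
    (δC : E) (hδC : δC = (‖δ‖⁻¹ : 𝕜) • δ - W.starProjection ((‖δ‖⁻¹ : 𝕜) • δ)) :
    ∑ j with label j = k₀, ‖⟪δ, d j⟫_𝕜‖ ≤ h * ‖δ‖ * √(1 + (t ^ 2 - 1) * ‖δC‖ ^ 2) := by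
  have hsum (k : κ) (x : E) (hx : x ∈ W ⊔ V k) :
      ∑ j with label j = k, ‖⟪x, d j⟫_𝕜‖ ≤ h * ‖x‖ :=
    sum_norm_inner_le_mul_norm_of_unit (hh k) hx
  have hh_nonneg : 0 ≤ h := by
    obtain ⟨k, hk⟩ : ∃ k, W ⊔ V k ≠ ⊥ := by
      by_contra! hbot
      exact hδ0 (by simpa only [hbot, iSup_bot, Submodule.mem_bot] using hδ)
    obtain ⟨x, hx, hx0⟩ := Submodule.exists_mem_ne_zero_of_ne_bot hk
    exact nonneg_of_mul_nonneg_left ((sum_nonneg fun _ _ ↦ norm_nonneg _).trans (hsum k x hx))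
      (norm_pos_iff.2 hx0)
  have hWV_iSup : W ⟂ ⨆ k ≠ k₀, V k := by
    simpa only [Submodule.isOrtho_iSup_right] using fun k _ ↦ hWV k
  have hδ_mem : δ ∈ W ⊔ ⨆ k ≠ k₀, V k := by
    refine (iSup₂_le fun k hk ↦ ?_ : ⨆ k ≠ k₀, W ⊔ V k ≤ W ⊔ ⨆ k ≠ k₀, V k) hδ
    exact sup_le_sup_left (le_iSup₂ (f := fun k (_ : k ≠ k₀) ↦ V k) k hk) W
  have h_norm : ‖δ - W.starProjection δ‖ = ‖δ‖ * ‖δC‖ := by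
    rw [hδC, map_smul, ← smul_sub, norm_smul, norm_inv, RCLike.norm_ofReal, abs_norm,
      mul_inv_cancel_left₀ (norm_ne_zero_iff.2 hδ0)]
  calc ∑ j with label j = k₀, ‖⟪δ, d j⟫_𝕜‖
      ≤ h * √(‖δ‖ ^ 2 + (t ^ 2 - 1) * ‖δ - W.starProjection δ‖ ^ 2) :=
        sum_norm_inner_le_mul_sqrt (hWV k₀) hWV_iSup (fun j hj ↦ (mem_filter.1 hj).2 ▸ hd j)
          hh_nonneg (hsum k₀) ht haff hδ_mem
    _ = h * √(‖δ‖ ^ 2 * (1 + (t ^ 2 - 1) * ‖δC‖ ^ 2)) := by rw [h_norm]; ring_nf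
    _ = h * ‖δ‖ * √(1 + (t ^ 2 - 1) * ‖δC‖ ^ 2) := by
        rw [Real.sqrt_mul (sq_nonneg _), Real.sqrt_sq (norm_nonneg _), mul_assoc]

end

/-- deterministic model, upper bound for in-cluster inner products:
columns `d j` of `D` are unit vectors in the union of `K` subspaces
`S k = span[U, Û_k]`; the cluster `S₁` is indexed by `0 : Fin K`.  `h₂` is an upper bound
for `‖δᵀD_k‖₁` over unit `δ ∈ S k`, and `aff_∞(Û₁, Û_{−1}) ≤ t₁`, where `Û_{−1}` spans
`⊕_{k≥2} span(Û_k)`.  For any nonzero `δ ∈ S_{−1} = ⊕_{k≥2} S k`, with `δ_C` the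
component of `δ/‖δ‖` orthogonal to `span U`,
`∑_{columns of D₁} |δᵀd| ≤ h₂‖δ‖√(1 + (t₁² − 1)‖δ_C‖²)`. -/
theorem stmt_12 (Mdim N K s : ℕ) [NeZero K] (p : Fin K → ℕ)
    (U : Fin s → EuclideanSpace ℝ (Fin Mdim))
    (Uh : (k : Fin K) → Fin (p k) → EuclideanSpace ℝ (Fin Mdim))
    (hU : Orthonormal ℝ U)
    (hUh : ∀ k, Orthonormal ℝ (Uh k))
    (hperp : ∀ k j i, ⟪U i, Uh k j⟫ = 0)
    (S : Fin K → Submodule ℝ (EuclideanSpace ℝ (Fin Mdim)))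
    (hS : ∀ k, S k = Submodule.span ℝ (Set.range U ∪ Set.range (Uh k)))
    (d : Fin N → EuclideanSpace ℝ (Fin Mdim))
    (label : Fin N → Fin K)
    (hdnorm : ∀ j, ‖d j‖ = 1)
    (hdmem : ∀ j, d j ∈ S (label j))
    (h₂ t₁ : ℝ) (ht₁0 : 0 ≤ t₁)
    (hh₂ : ∀ k, ∀ δ ∈ S k, ‖δ‖ = 1 →
      (∑ j ∈ univ.filter (fun j => label j = k), |⟪δ, d j⟫|) ≤ h₂)
    (haff₁ : ∀ x ∈ Submodule.span ℝ (Set.range (Uh (0 : Fin K))),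
      ∀ y ∈ ⨆ k, ⨆ (_ : k ≠ (0 : Fin K)), Submodule.span ℝ (Set.range (Uh k)),
      |⟪x, y⟫| ≤ t₁ * ‖x‖ * ‖y‖)
    (δ : EuclideanSpace ℝ (Fin Mdim)) (hδ0 : δ ≠ 0)
    (hδmem : δ ∈ ⨆ k, ⨆ (_ : k ≠ (0 : Fin K)), S k)
    (δC : EuclideanSpace ℝ (Fin Mdim))
    (hδC : δC = ‖δ‖⁻¹ • δ -
      (Submodule.orthogonalProjectionOnto (Submodule.span ℝ (Set.range U)) (‖δ‖⁻¹ • δ) :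
        EuclideanSpace ℝ (Fin Mdim))) :
    (∑ j ∈ univ.filter (fun j => label j = (0 : Fin K)), |⟪δ, d j⟫|) ≤
      h₂ * ‖δ‖ * Real.sqrt (1 + (t₁ ^ 2 - 1) * ‖δC‖ ^ 2) := by
  obtain rfl : S = fun k ↦ Submodule.span ℝ (Set.range U) ⊔ Submodule.span ℝ (Set.range (Uh k)) :=
    funext fun k ↦ (hS k).trans (Submodule.span_union _ _)
  have hWV (k : Fin K) : Submodule.span ℝ (Set.range U) ⟂ Submodule.span ℝ (Set.range (Uh k)) :=
    Submodule.isOrtho_span.2 (by rintro _ ⟨i, rfl⟩ _ ⟨j, rfl⟩; exact hperp k j i)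
  exact stmt_12_general _ _ 0 hWV d label hdmem h₂ t₁ ht₁0 hh₂ haff₁ δ hδ0 hδmem δC hδC
end

section
/- Let z₁,…,z_m be i.i.d. standard Gaussian random variables, let 1 ≤ s < m be integers, and let ζ > 1 be a constant. Then P[ (Σ_{i=1}^s z_i² / s) / (Σ_{i=s+1}^m z_i² / (m−s)) > ζ ] ≤ 2e^{−ε²}, where ε = [ −(√s + ζs/√(m−s)) + √( (√s + ζs/√(m−s))² + 2s(ζ−1) ) ] / 2. -/
open MeasureTheory ProbabilityTheory Finset

/-! The numerator and the denominator are treated separately, so only their individual moment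
generating functions matter. For a chi-squared variable with `k` degrees of freedom this is
`(1 - 2 * t) ^ (-k / 2)`, and Chernoff's method yields the Laurent–Massart bounds
`P(X ≥ k + 2 √k x + 2 x²) ≤ exp (-x²)` and `P(X ≤ k - 2 √k x) ≤ exp (-x²)`.
If a ratio `u / v` exceeds `ζ`, then `u ≥ ζ * b` or `v ≤ b` for every `b > 0`. The number `ε` is
the nonnegative root of a quadratic equation that says that, after division by the degrees of
freedom, the two deviation thresholds at `x = ε` are of the form `ζ * b` and `b`. -/

section RealInequalities

lemma log_le_sub_inv_div_two {w : ℝ} (hw : 1 ≤ w) : Real.log w ≤ (w - w⁻¹) / 2 := by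
  rw [← Real.sinh_log (by positivity)]
  exact Real.self_le_sinh_iff.2 (Real.log_nonneg hw)

lemma sub_sq_div_two_le_log_one_add {u : ℝ} (hu : 0 ≤ u) : u - u ^ 2 / 2 ≤ Real.log (1 + u) := by
  refine le_trans ?_ (Real.le_log_one_add_of_nonneg hu)
  rw [le_div_iff₀ (by positivity)]
  linarith [pow_nonneg hu 3]

lemma mul_le_or_le_of_lt_div {u v b ζ : ℝ} (hb : 0 < b) (hζ : 0 ≤ ζ) (h : ζ < u / v) :
    ζ * b ≤ u ∨ v ≤ b := by
  by_contra! hcon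
  obtain ⟨hu, hv⟩ := hcon
  have hlt : ζ * v < u := (lt_div_iff₀ (hb.trans hv)).1 h
  linarith [mul_le_mul_of_nonneg_left hv.le hζ]

lemma nonneg_of_eq_quadratic_root {A c x : ℝ} (hc : 0 ≤ c) (hx : x = (-A + √(A ^ 2 + 2 * c)) / 2) :
    0 ≤ x := by
  have : A ≤ √(A ^ 2 + 2 * c) := Real.le_sqrt_of_sq_le (by linarith)
  linarith

lemma two_mul_sq_add_of_eq_quadratic_root {A c x : ℝ} (hc : 0 ≤ c)
    (hx : x = (-A + √(A ^ 2 + 2 * c)) / 2) :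
    2 * x ^ 2 + 2 * A * x = c := by
  have hsqrt : √(A ^ 2 + 2 * c) ^ 2 = A ^ 2 + 2 * c := Real.sq_sqrt (by positivity)
  have : √(A ^ 2 + 2 * c) = 2 * x + A := by linarith
  rw [this] at hsqrt
  linarith

end RealInequalities

lemma card_filter_le_val (m s : ℕ) : #{i : Fin m | s ≤ (i : ℕ)} = m - s := by
  have h := card_filter_add_card_filter_not (s := (univ : Finset (Fin m))) fun i ↦ (i : ℕ) < s
  simp only [not_lt, card_univ, Fintype.card_fin, Fin.card_filter_val_lt] at h
  omega

lemma mgf_sq_gaussianReal {v : NNReal} {t : ℝ} (ht : 2 * v * t < 1) :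
    mgf (fun x ↦ x ^ 2) (gaussianReal 0 v) t = (1 - 2 * v * t) ^ (-(1 / 2) : ℝ) := by
  rcases eq_or_ne v 0 with rfl | hv
  · simp [mgf]
  have hpos : 0 < 1 - 2 * v * t := by linarith
  have hdensity (x : ℝ) : gaussianPDFReal 0 v x • Real.exp (t * x ^ 2) =
      (√(2 * Real.pi * v))⁻¹ * Real.exp (-((1 - 2 * v * t) / (2 * v)) * x ^ 2) := by
    rw [gaussianPDFReal, smul_eq_mul, mul_assoc, ← Real.exp_add]
    congr 2
    field_simp
    ring
  rw [mgf, integral_gaussianReal_eq_integral_smul hv]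
  simp_rw [hdensity]
  rw [integral_const_mul, integral_gaussian, Real.rpow_neg hpos.le, ← Real.sqrt_eq_rpow,
    ← Real.sqrt_inv, ← Real.sqrt_inv, ← Real.sqrt_mul (by positivity)]
  congr 1
  field_simp

section ChiSquared

variable {Ω : Type*} [MeasurableSpace Ω] {μ : Measure Ω}

lemma hasLaw_of_map_eq {E : Type*} [MeasurableSpace E] {ν : Measure E} [NeZero ν] {X : Ω → E}
    (h : μ.map X = ν) : HasLaw X ν μ :=
  ⟨.of_map_ne_zero (h ▸ NeZero.ne ν), h⟩

/-- The moment generating function of `X` exists on `t < 1 / 2` and is there at most that of the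
chi-squared distribution with `k` degrees of freedom, where `k` may be any real number. The
analogue of `HasSubgaussianMGF`, not centered: chi-squared variables satisfy it with equality. -/
structure HasSubChiSquaredMGF (X : Ω → ℝ) (k : ℝ) (μ : Measure Ω) : Prop where
  integrable_exp_mul : ∀ t < 1 / 2, Integrable (fun ω ↦ Real.exp (t * X ω)) μ
  mgf_le : ∀ t < 1 / 2, mgf X μ t ≤ (1 - 2 * t) ^ (-(k / 2))

namespace HasSubChiSquaredMGF

variable {X U V : Ω → ℝ} {k n s x ζ ε : ℝ}

lemma isFiniteMeasure (h : HasSubChiSquaredMGF X k μ) : IsFiniteMeasure μ := by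
  simpa [integrable_const_iff] using h.integrable_exp_mul 0 (by norm_num)

lemma aemeasurable (h : HasSubChiSquaredMGF X k μ) : AEMeasurable X μ :=
  Real.aemeasurable_of_aemeasurable_exp_mul (t := -1) (by norm_num)
    (h.integrable_exp_mul (-1) (by norm_num)).aemeasurable

lemma sq_of_hasLaw (hX : HasLaw X (gaussianReal 0 1) μ) :
    HasSubChiSquaredMGF (fun ω ↦ X ω ^ 2) 1 μ := by
  have : IsProbabilityMeasure μ := hX.isProbabilityMeasure
  have hmgf (t : ℝ) (ht : t < 1 / 2) :
      mgf (fun ω ↦ X ω ^ 2) μ t = (1 - 2 * t) ^ (-(1 / 2) : ℝ) := by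
    have h := mgf_sq_gaussianReal (v := 1) (t := t) (by norm_num; linarith)
    rw [← hX.map_eq, mgf_map hX.aemeasurable (by fun_prop)] at h
    simpa [Function.comp_def] using h
  refine ⟨fun t ht ↦ mgf_pos_iff.1 ?_, fun t ht ↦ (hmgf t ht).le⟩
  rw [hmgf t ht]
  exact Real.rpow_pos_of_pos (by linarith) _

lemma sum {ι : Type*} {X : ι → Ω → ℝ} {k : ι → ℝ} {S : Finset ι} (hindep : iIndepFun X μ)
    (h : ∀ i ∈ S, HasSubChiSquaredMGF (X i) (k i) μ) :
    HasSubChiSquaredMGF (fun ω ↦ ∑ i ∈ S, X i ω) (∑ i ∈ S, k i) μ := by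
  have : IsProbabilityMeasure μ := hindep.isProbabilityMeasure
  have hmgf (t : ℝ) : mgf (fun ω ↦ ∑ i ∈ S, X i ω) μ t = ∏ i ∈ S, mgf (X i) μ t := by
    have hprod := (hindep.precomp Subtype.val_injective).mgf_sum₀ (t := t)
      (fun i : S ↦ (h i i.2).aemeasurable) univ
    rw [S.sum_coe_sort X, S.prod_coe_sort (fun i ↦ mgf (X i) μ t)] at hprod
    rw [← hprod, Finset.sum_fn]
  refine ⟨fun t ht ↦ mgf_pos_iff.1 ?_, fun t ht ↦ ?_⟩
  · rw [hmgf]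
    exact prod_pos fun i hi ↦ mgf_pos ((h i hi).integrable_exp_mul t ht)
  · calc mgf (fun ω ↦ ∑ i ∈ S, X i ω) μ t
        = ∏ i ∈ S, mgf (X i) μ t := hmgf t
      _ ≤ ∏ i ∈ S, (1 - 2 * t) ^ (-(k i / 2)) :=
        prod_le_prod (fun _ _ ↦ mgf_nonneg) fun i hi ↦ (h i hi).mgf_le t ht
      _ = (1 - 2 * t) ^ (-((∑ i ∈ S, k i) / 2)) := by
        rw [← Real.rpow_sum_of_pos (by linarith), sum_neg_distrib, sum_div]

lemma sum_sq {ι : Type*} {z : ι → Ω → ℝ} {S : Finset ι} (hindep : iIndepFun z μ)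
    (hlaw : ∀ i ∈ S, HasLaw (z i) (gaussianReal 0 1) μ) :
    HasSubChiSquaredMGF (fun ω ↦ ∑ i ∈ S, z i ω ^ 2) #S μ := by
  simpa using sum (k := fun _ ↦ 1) (hindep.comp (fun _ x ↦ x ^ 2) fun _ ↦ by fun_prop)
    fun i hi ↦ sq_of_hasLaw (hlaw i hi)

lemma exp_mul_mgf_le (h : HasSubChiSquaredMGF X k μ) {t : ℝ} (ht : t < 1 / 2) (a : ℝ) :
    Real.exp (-t * a) * mgf X μ t ≤ Real.exp (-t * a - k / 2 * Real.log (1 - 2 * t)) := by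
  have hmgf := h.mgf_le t ht
  rw [Real.rpow_def_of_pos (by linarith)] at hmgf
  calc Real.exp (-t * a) * mgf X μ t
      ≤ Real.exp (-t * a) * Real.exp (Real.log (1 - 2 * t) * -(k / 2)) := by gcongr
    _ = Real.exp (-t * a - k / 2 * Real.log (1 - 2 * t)) := by
      rw [← Real.exp_add]
      ring_nf

lemma measureReal_ge_le (h : HasSubChiSquaredMGF X k μ) (hk : 0 < k) (hx : 0 ≤ x) :
    μ.real {ω | k + 2 * √k * x + 2 * x ^ 2 ≤ X ω} ≤ Real.exp (-x ^ 2) := by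
  have := h.isFiniteMeasure
  obtain ⟨r, hr, rfl⟩ : ∃ r, 0 < r ∧ k = r ^ 2 := ⟨√k, by positivity, by simp [hk.le]⟩
  rw [Real.sqrt_sq hr.le]
  obtain ⟨w, hw, rfl⟩ : ∃ w, 1 ≤ w ∧ x = r * (w - 1) / 2 :=
    ⟨1 + 2 * x / r, le_add_of_nonneg_right (by positivity), by field_simp; ring⟩
  -- Chernoff's parameter is `t = x / (r + 2 * x)`, for which `1 - 2 * t = w⁻¹`.
  have ht : (1 - w⁻¹) / 2 < 1 / 2 := by linarith [show 0 < w⁻¹ by positivity]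
  have ht0 : 0 ≤ (1 - w⁻¹) / 2 := by linarith [inv_le_one_of_one_le₀ hw]
  refine (measure_ge_le_exp_mul_mgf _ ht0 (h.integrable_exp_mul _ ht)).trans
    ((h.exp_mul_mgf_le ht _).trans (Real.exp_le_exp.2 ?_))
  rw [show 1 - 2 * ((1 - w⁻¹) / 2) = w⁻¹ by ring, Real.log_inv]
  calc -((1 - w⁻¹) / 2) * (r ^ 2 + 2 * r * (r * (w - 1) / 2) + 2 * (r * (w - 1) / 2) ^ 2)
        - r ^ 2 / 2 * -Real.log w
      ≤ -((1 - w⁻¹) / 2) * (r ^ 2 + 2 * r * (r * (w - 1) / 2) + 2 * (r * (w - 1) / 2) ^ 2)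
        - r ^ 2 / 2 * -((w - w⁻¹) / 2) := by gcongr; exact log_le_sub_inv_div_two hw
    _ = -(r * (w - 1) / 2) ^ 2 := by field_simp; ring

lemma measureReal_le_le (h : HasSubChiSquaredMGF X k μ) (hk : 0 < k) (hx : 0 ≤ x) :
    μ.real {ω | X ω ≤ k - 2 * √k * x} ≤ Real.exp (-x ^ 2) := by
  have := h.isFiniteMeasure
  obtain ⟨r, hr, rfl⟩ : ∃ r, 0 < r ∧ k = r ^ 2 := ⟨√k, by positivity, by simp [hk.le]⟩
  rw [Real.sqrt_sq hr.le]
  obtain ⟨u, hu, rfl⟩ : ∃ u, 0 ≤ u ∧ x = r * u / 2 := ⟨2 * x / r, by positivity, by field_simp⟩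
  have ht : -u / 2 < 1 / 2 := by linarith
  refine (measure_le_le_exp_mul_mgf _ (by linarith) (h.integrable_exp_mul _ ht)).trans
    ((h.exp_mul_mgf_le ht _).trans (Real.exp_le_exp.2 ?_))
  rw [show 1 - 2 * (-u / 2) = 1 + u by ring]
  calc -(-u / 2) * (r ^ 2 - 2 * r * (r * u / 2)) - r ^ 2 / 2 * Real.log (1 + u)
      ≤ -(-u / 2) * (r ^ 2 - 2 * r * (r * u / 2)) - r ^ 2 / 2 * (u - u ^ 2 / 2) := by
        gcongr; exact sub_sq_div_two_le_log_one_add hu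
    _ = -(r * u / 2) ^ 2 := by ring

lemma measureReal_lt_ratio_le (hU : HasSubChiSquaredMGF U s μ) (hV : HasSubChiSquaredMGF V n μ)
    (hs : 0 < s) (hn : 0 < n) (hζ : 0 ≤ ζ) (hε : 0 ≤ ε)
    (hquad : 2 * ε ^ 2 + 2 * (√s + ζ * s / √n) * ε ≤ s * (ζ - 1)) :
    μ.real {ω | ζ < (U ω / s) / (V ω / n)} ≤ 2 * Real.exp (-ε ^ 2) := by
  have := hU.isFiniteMeasure
  set b := (n - 2 * √n * ε) / n with hb
  have hthreshold : s + 2 * √s * ε + 2 * ε ^ 2 ≤ s * ζ * b := by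
    have hb' : b = 1 - 2 * ε / √n := by
      rw [hb, sub_div, div_self hn.ne', mul_right_comm, mul_div_assoc, Real.sqrt_div_self']
      ring
    rw [hb']
    linear_combination hquad
  have hbpos : 0 < b := pos_of_mul_pos_right (lt_of_lt_of_le (by positivity) hthreshold)
    (by positivity)
  have hsub : {ω | ζ < (U ω / s) / (V ω / n)} ⊆
      {ω | s + 2 * √s * ε + 2 * ε ^ 2 ≤ U ω} ∪ {ω | V ω ≤ n - 2 * √n * ε} := by
    intro ω hω
    refine (mul_le_or_le_of_lt_div hbpos hζ hω).imp (fun hle ↦ ?_) fun hle ↦ ?_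
    · rw [le_div_iff₀ hs] at hle
      exact hthreshold.trans (by linarith)
    · exact (div_le_div_iff_of_pos_right hn).1 hle
  calc μ.real {ω | ζ < (U ω / s) / (V ω / n)}
      ≤ μ.real {ω | s + 2 * √s * ε + 2 * ε ^ 2 ≤ U ω} + μ.real {ω | V ω ≤ n - 2 * √n * ε} :=
        (measureReal_mono hsub).trans (measureReal_union_le _ _)
    _ ≤ Real.exp (-ε ^ 2) + Real.exp (-ε ^ 2) :=
        add_le_add (hU.measureReal_ge_le hs hε) (hV.measureReal_le_le hn hε)
    _ = 2 * Real.exp (-ε ^ 2) := (two_mul _).symm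

end HasSubChiSquaredMGF

theorem stmt_13_general {U V : Ω → ℝ} {s n ζ ε : ℝ}
    (hU : HasSubChiSquaredMGF U s μ) (hV : HasSubChiSquaredMGF V n μ)
    (hs : 0 < s) (hn : 0 < n) (hζ : 1 ≤ ζ)
    (hε : ε = (-(√s + ζ * s / √n) + √((√s + ζ * s / √n) ^ 2 + 2 * s * (ζ - 1))) / 2) :
    μ {ω | ζ < (U ω / s) / (V ω / n)} ≤ ENNReal.ofReal (2 * Real.exp (-ε ^ 2)) := by
  have hc : 0 ≤ s * (ζ - 1) := mul_nonneg hs.le (by linarith)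
  rw [mul_assoc 2 s] at hε
  have := hU.isFiniteMeasure
  rw [← ofReal_measureReal]
  exact ENNReal.ofReal_le_ofReal <| hU.measureReal_lt_ratio_le hV hs hn (by linarith)
    (nonneg_of_eq_quadratic_root hc hε) (two_mul_sq_add_of_eq_quadratic_root hc hε).le

end ChiSquared

/-- Let `z₁,…,z_m` be i.i.d. standard Gaussian random variables, `1 ≤ s < m`
and `ζ > 1`.  Then
`P[(∑_{i≤s} z_i²/s)/(∑_{i>s} z_i²/(m−s)) > ζ] ≤ 2e^{−ε²}`, where
`ε = [−(√s + ζs/√(m−s)) + √((√s + ζs/√(m−s))² + 2s(ζ−1))]/2`. -/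
theorem stmt_13 {Ω : Type*} [MeasurableSpace Ω] (μ : Measure Ω) [IsProbabilityMeasure μ]
    (m s : ℕ) (hs : 1 ≤ s) (hsm : s < m)
    (z : Fin m → Ω → ℝ)
    (hindep : iIndepFun z μ)
    (hdist : ∀ i, Measure.map (z i) μ = gaussianReal 0 1)
    (ζ : ℝ) (hζ : 1 < ζ)
    (ε : ℝ)
    (hε : ε = (-(Real.sqrt s + ζ * s / Real.sqrt ((m : ℝ) - s)) +
      Real.sqrt ((Real.sqrt s + ζ * s / Real.sqrt ((m : ℝ) - s)) ^ 2 +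
        2 * s * (ζ - 1))) / 2) :
    μ {ω | ζ < ((∑ i ∈ univ.filter (fun i : Fin m => (i : ℕ) < s), z i ω ^ 2) / s) /
        ((∑ i ∈ univ.filter (fun i : Fin m => s ≤ (i : ℕ)), z i ω ^ 2) / ((m : ℝ) - s))} ≤
      ENNReal.ofReal (2 * Real.exp (-ε ^ 2)) := by
  have hlaw (i : Fin m) : HasLaw (z i) (gaussianReal 0 1) μ := hasLaw_of_map_eq (hdist i)
  have hU := HasSubChiSquaredMGF.sum_sq (S := {i : Fin m | (i : ℕ) < s}) hindep fun i _ ↦ hlaw i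
  have hV := HasSubChiSquaredMGF.sum_sq (S := {i : Fin m | s ≤ (i : ℕ)}) hindep fun i _ ↦ hlaw i
  rw [Fin.card_filter_val_lt, min_eq_right hsm.le] at hU
  rw [card_filter_le_val, Nat.cast_sub hsm.le] at hV
  exact stmt_13_general hU hV (by positivity) (by simpa using hsm) hζ.le hε
end

section
/- Let U ∈ ℝ^{M×s}, Û₁ ∈ ℝ^{M×(m−s)}, and Ũ₂,…,Ũ_K be matrices such that both [U, Û₁] and [U, Ũ₂,…,Ũ_K] have orthonormal columns, and suppose the ℓ₂ operator norm of Û₁ᵀŨ_k is at most t₂ for every k = 2,…,K. Let q = Uα + Û₁β with ‖α‖₂² + ‖β‖₂² = 1, and let δ be any unit ℓ₂-norm vector in the column span of [U, Ũ₂,…,Ũ_K]. Then ⟨q, δ⟩² ≤ ‖α‖₂² + (K−1)t₂²‖β‖₂². -/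
open scoped RealInnerProductSpace

/-!
The spans of `U, Ũ₂, …, Ũ_K` are pairwise orthogonal, so a unit vector `δ` splits into components
whose squared norms add up to `1`. A bound `‖⟪q, w⟫‖ ≤ c k * ‖w‖` on each of these subspaces
therefore gives `‖⟪q, δ⟫‖² ≤ ∑ k, c k ^ 2`, by one application of the Cauchy–Schwarz inequality to
the norms of the components. For `q = Uα + Û₁β` the bound on `span U` is `‖α‖`, because `Û₁β` is
orthogonal to it, and the bound on `span Ũ_k` is `t₂ * ‖β‖`, because `Uα` is orthogonal to it.
-/

section

variable {𝕜 E ι κ τ : Type*} [RCLike 𝕜] [NormedAddCommGroup E] [InnerProductSpace 𝕜 E]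

theorem norm_inner_sq_le_of_mem_iSup [Fintype τ] {W : τ → Submodule 𝕜 E}
    (hW : Pairwise fun k l => W k ⟂ W l) {q : E} {c : τ → ℝ}
    (hc : ∀ k, ∀ w ∈ W k, ‖inner 𝕜 q w‖ ≤ c k * ‖w‖) {δ : E} (hδ : δ ∈ ⨆ k, W k) :
    ‖inner 𝕜 q δ‖ ^ 2 ≤ (∑ k, c k ^ 2) * ‖δ‖ ^ 2 := by
  obtain ⟨f, hf, rfl⟩ := (Submodule.mem_iSup_iff_exists_finsupp W δ).1 hδ
  rw [Finsupp.sum_fintype f (fun _ w => w) fun _ => rfl]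
  have pythagoras : ‖∑ k, f k‖ ^ 2 = ∑ k, ‖f k‖ ^ 2 :=
    (OrthogonalFamily.of_pairwise hW).norm_sum (fun k => ⟨f k, hf k⟩) Finset.univ
  have inner_le : ‖inner 𝕜 q (∑ k, f k)‖ ≤ ∑ k, c k * ‖f k‖ := by
    rw [inner_sum]
    exact norm_sum_le_of_le _ fun k _ => hc k (f k) (hf k)
  calc ‖inner 𝕜 q (∑ k, f k)‖ ^ 2 ≤ (∑ k, c k * ‖f k‖) ^ 2 := by gcongr
    _ ≤ (∑ k, c k ^ 2) * ∑ k, ‖f k‖ ^ 2 := Finset.sum_mul_sq_le_sq_mul_sq _ _ _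
    _ = (∑ k, c k ^ 2) * ‖∑ k, f k‖ ^ 2 := by rw [pythagoras]

theorem norm_inner_add_sq_le_of_mem_sup_iSup [Fintype τ] {V : Submodule 𝕜 E}
    {W : τ → Submodule 𝕜 E} (hVW : ∀ k, V ⟂ W k) (hW : Pairwise fun k l => W k ⟂ W l)
    {a b : E} (ha : a ∈ V) (hb : b ∈ Vᗮ) {c : τ → ℝ}
    (hc : ∀ k, ∀ w ∈ W k, ‖inner 𝕜 b w‖ ≤ c k * ‖w‖) {δ : E} (hδ : δ ∈ V ⊔ ⨆ k, W k) :
    ‖inner 𝕜 (a + b) δ‖ ^ 2 ≤ (‖a‖ ^ 2 + ∑ k, c k ^ 2) * ‖δ‖ ^ 2 := by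
  let W' : Option τ → Submodule 𝕜 E := fun o => o.elim V W
  let c' : Option τ → ℝ := fun o => o.elim ‖a‖ c
  have hW' : Pairwise fun k l => W' k ⟂ W' l := by
    rintro (_ | k) (_ | l) hkl
    · exact absurd rfl hkl
    · exact hVW l
    · exact (hVW k).symm
    · exact hW fun h => hkl (congrArg some h)
  have hc' : ∀ k, ∀ w ∈ W' k, ‖inner 𝕜 (a + b) w‖ ≤ c' k * ‖w‖ := by
    rintro (_ | k) w hw
    · rw [inner_add_left, Submodule.inner_left_of_mem_orthogonal hw hb, add_zero]
      exact norm_inner_le_norm a w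
    · rw [inner_add_left, (hVW k).inner_eq ha hw, zero_add]
      exact hc k w hw
  have hδ' : δ ∈ ⨆ k, W' k := by rwa [iSup_option]
  simpa only [Fintype.sum_option, c', Option.elim_none, Option.elim_some] using
    norm_inner_sq_le_of_mem_iSup hW' hc' hδ'

theorem isOrtho_span_range_comp_of_orthonormal {ι₁ ι₂ : Type*} {v : ι → E}
    (hv : Orthonormal 𝕜 v) {e₁ : ι₁ → ι} {e₂ : ι₂ → ι} (he : ∀ i j, e₁ i ≠ e₂ j) :
    Submodule.span 𝕜 (Set.range (v ∘ e₁)) ⟂ Submodule.span 𝕜 (Set.range (v ∘ e₂)) := by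
  rw [Submodule.isOrtho_span]
  rintro _ ⟨i, rfl⟩ _ ⟨j, rfl⟩
  exact hv.2 (he i j)

theorem norm_sum_smul_sq_of_orthonormal [Fintype ι] {v : ι → E} (hv : Orthonormal 𝕜 v)
    (l : ι → 𝕜) : ‖∑ i, l i • v i‖ ^ 2 = ∑ i, ‖l i‖ ^ 2 := by
  simpa using hv.orthogonalFamily.norm_sum l Finset.univ

theorem stmt_15_general [Fintype ι] [Fintype κ] [Fintype τ] {p : τ → Type*}
    {U : ι → E} {Uh₁ : κ → E} {Ut : (k : τ) → p k → E}
    (hUUh₁ : Orthonormal 𝕜 (Sum.elim U Uh₁))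
    (hUUt : Orthonormal 𝕜 (Sum.elim U (fun x : Σ k, p k => Ut x.1 x.2)))
    {t : τ → ℝ}
    (hop : ∀ k, ∀ x ∈ Submodule.span 𝕜 (Set.range Uh₁),
      ∀ y ∈ Submodule.span 𝕜 (Set.range (Ut k)), ‖inner 𝕜 x y‖ ≤ t k * ‖x‖ * ‖y‖)
    (α : ι → 𝕜) (β : κ → 𝕜) {δ : E}
    (hδ : δ ∈ Submodule.span 𝕜 (Set.range U) ⊔ ⨆ k, Submodule.span 𝕜 (Set.range (Ut k))) :
    ‖inner 𝕜 ((∑ i, α i • U i) + ∑ j, β j • Uh₁ j) δ‖ ^ 2 ≤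
      ((∑ i, ‖α i‖ ^ 2) + (∑ k, t k ^ 2) * ∑ j, ‖β j‖ ^ 2) * ‖δ‖ ^ 2 := by
  have hU_Uh₁ : Submodule.span 𝕜 (Set.range U) ⟂ Submodule.span 𝕜 (Set.range Uh₁) :=
    isOrtho_span_range_comp_of_orthonormal hUUh₁ (e₁ := Sum.inl) (e₂ := Sum.inr) (by simp)
  have hU_Ut (k : τ) : Submodule.span 𝕜 (Set.range U) ⟂ Submodule.span 𝕜 (Set.range (Ut k)) :=
    isOrtho_span_range_comp_of_orthonormal hUUt
      (e₁ := Sum.inl) (e₂ := fun j => Sum.inr ⟨k, j⟩) (by simp)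
  have hUt : Pairwise fun k l =>
      Submodule.span 𝕜 (Set.range (Ut k)) ⟂ Submodule.span 𝕜 (Set.range (Ut l)) := fun k l hkl =>
    isOrtho_span_range_comp_of_orthonormal hUUt
      (e₁ := fun i => Sum.inr ⟨k, i⟩) (e₂ := fun j => Sum.inr ⟨l, j⟩) (by simp [hkl])
  have hα := norm_sum_smul_sq_of_orthonormal (hUUh₁.comp Sum.inl Sum.inl_injective) α
  have hβ := norm_sum_smul_sq_of_orthonormal (hUUh₁.comp Sum.inr Sum.inr_injective) β
  simp only [Function.comp_apply, Sum.elim_inl, Sum.elim_inr] at hα hβ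
  have hα_mem : ∑ i, α i • U i ∈ Submodule.span 𝕜 (Set.range U) :=
    (Submodule.mem_span_range_iff_exists_fun 𝕜).2 ⟨α, rfl⟩
  have hβ_mem : ∑ j, β j • Uh₁ j ∈ Submodule.span 𝕜 (Set.range Uh₁) :=
    (Submodule.mem_span_range_iff_exists_fun 𝕜).2 ⟨β, rfl⟩
  have key := norm_inner_add_sq_le_of_mem_sup_iSup hU_Ut hUt hα_mem
    (hU_Uh₁.symm hβ_mem) (fun k => hop k _ hβ_mem) hδ
  simpa only [mul_pow, ← Finset.sum_mul, hα, hβ] using key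

end

/-- Let `U ∈ ℝ^{M×s}`, `Û₁ ∈ ℝ^{M×(m−s)}`, and `Ũ₂,…,Ũ_K` be such that both
`[U, Û₁]` and `[U, Ũ₂,…,Ũ_K]` have orthonormal columns, and the largest singular value of
`Û₁ᵀŨ_k` is at most `t₂` for every `k` (equivalently `|⟪x, y⟫| ≤ t₂‖x‖‖y‖` for all
`x ∈ span(Û₁)`, `y ∈ span(Ũ_k)`).  Let `q = Uα + Û₁β` with `‖α‖² + ‖β‖² = 1` and let `δ`
be a unit vector in the column span of `[U, Ũ₂,…,Ũ_K]`.  Then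
`⟪q, δ⟫² ≤ ‖α‖² + (K−1)t₂²‖β‖²`.  The `K−1` matrices `Ũ₂,…,Ũ_K` are indexed by
`Fin (K−1)`. -/
theorem stmt_15 (M m s K : ℕ) (hK : 2 ≤ K) (hsm : s ≤ m) (p : Fin (K - 1) → ℕ)
    (U : Fin s → EuclideanSpace ℝ (Fin M))
    (Uh₁ : Fin (m - s) → EuclideanSpace ℝ (Fin M))
    (Ut : (k : Fin (K - 1)) → Fin (p k) → EuclideanSpace ℝ (Fin M))
    (hUUh₁ : Orthonormal ℝ (Sum.elim U Uh₁))
    (hUUt : Orthonormal ℝ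
      (Sum.elim U (fun x : Σ k : Fin (K - 1), Fin (p k) => Ut x.1 x.2)))
    (t₂ : ℝ)
    (hop : ∀ k : Fin (K - 1), ∀ x ∈ Submodule.span ℝ (Set.range Uh₁),
      ∀ y ∈ Submodule.span ℝ (Set.range (Ut k)), |⟪x, y⟫| ≤ t₂ * ‖x‖ * ‖y‖)
    (α : Fin s → ℝ) (β : Fin (m - s) → ℝ)
    (hnorm : (∑ i, α i ^ 2) + ∑ j, β j ^ 2 = 1)
    (q : EuclideanSpace ℝ (Fin M))
    (hq : q = (∑ i, α i • U i) + ∑ j, β j • Uh₁ j)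
    (δ : EuclideanSpace ℝ (Fin M)) (hδ : ‖δ‖ = 1)
    (hδmem : δ ∈ Submodule.span ℝ (Set.range U) ⊔
      ⨆ k, Submodule.span ℝ (Set.range (Ut k))) :
    ⟪q, δ⟫ ^ 2 ≤ (∑ i, α i ^ 2) + ((K : ℝ) - 1) * t₂ ^ 2 * ∑ j, β j ^ 2 := by
  have hcard : ((K - 1 : ℕ) : ℝ) = K - 1 := by rw [Nat.cast_sub (by lia), Nat.cast_one]
  simpa [hq, hδ, hcard] using stmt_15_general (t := fun _ => t₂) hUUh₁ hUUt hop α β hδmem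
end
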